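/- arXiv:2106.00395 — 3 statements merged into one kernel-verified Lean document; each statement's English description precedes it below -/
import Mathlib

section
/- For any odd positive integer n and any odd prime p, there are infinitely many integers d (with d, d+1, d+4 and d+4p^2 all negative) such that n divides the class number of each of the four imaginary quadratic fields ℚ(√d), ℚ(√(d+1)), ℚ(√(d+4)) and ℚ(√(d+4p^2)); that is, the set of such integers d is infinite. -/
/-- The quadratic field `ℚ(√d)`, realized as the subfield of `ℂ` generated over `ℚ`
by a complex square root of `d`. -/
noncomputable def Qsqrt (d : ℤ) : IntermediateField ℚ ℂ :=
  IntermediateField.adjoin ℚ {((d : ℂ) ^ ((1 : ℂ) / 2))}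

/-- The class number of `ℚ(√d)`: the order of the ideal class group of its ring of
integers. -/
noncomputable def classNumSqrt (d : ℤ) : ℕ :=
  Nat.card (ClassGroup (NumberField.RingOfIntegers (Qsqrt d)))

/-!
If `α` is an integer of an imaginary quadratic field whose norm is `M ^ n` and whose trace `T ≠ 0`
is coprime to `M`, then `α` is coprime to its conjugate, so `(α) = I ^ n` for an ideal `I`. The
class of `I` has order exactly `n` unless, up to a unit, `α` is a proper power of prime exponent
dividing `n`; absorbing the unit, `α = γ ^ q` with `q` prime. Then `T` is a Dickson polynomial in
`a = trace γ` with parameter `N = norm γ`: it is divisible by `a`, and congruent to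
`a ^ q - q * N * a ^ (q - 2)` modulo `N ^ 2`. Either `T ≠ a ^ q`, and `N` divides the difference, or
`N` divides `q * a ^ (q - 2)`. Both bound `N`, hence `M`, in terms of `T`. So `n` divides the class
number of `ℚ(√(T ^ 2 - 4 * M ^ n))` once `M` is large compared with `T`.

For `d = -4 * k ^ n`, this applies to `d + a ^ 2` with `T = a` and `M = k` if `a ≠ 0`, while
choosing `k = 4 * m ^ n - 1` makes `d = (2 * k ^ ((n - 1) / 2)) ^ 2 * (1 - 4 * m ^ n)` a square
multiple of the discriminant for `T = 1` and `M = m`. Divisibility of `m` by `3` keeps `ℚ(√-3)`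
away, whose units need not be `n`-th powers, and divisibility of `m` by `a` makes `a` coprime
to `k`.
-/

open Polynomial NumberField

section Dickson

variable {A : Type*} [CommRing A]

theorem sq_dvd_eval_dickson_one_sub (N a : A) (k : ℕ) :
    N ^ 2 ∣ (dickson 1 N (k + 2)).eval a - (a ^ (k + 2) - (k + 2) * N * a ^ k) := by
  induction k using Nat.twoStepInduction with
  | zero | one =>
    refine ⟨0, ?_⟩
    simp only [dickson_add_two, dickson_one, dickson_zero, zero_add, eval_sub, eval_mul, eval_X,
      eval_C, eval_natCast, eval_ofNat]
    push_cast
    ring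
  | more k ih₁ ih₂ =>
    obtain ⟨u, hu⟩ := ih₁
    obtain ⟨v, hv⟩ := ih₂
    refine ⟨a * v - N * u + (k + 2) * a ^ k, ?_⟩
    rw [dickson_add_two]
    simp only [eval_sub, eval_mul, eval_X, eval_C]
    push_cast at hv ⊢
    linear_combination a * hv - N * hu

theorem dvd_eval_dickson_one_of_odd (N a : A) {n : ℕ} (hn : Odd n) :
    a ∣ (dickson 1 N n).eval a := by
  obtain ⟨j, rfl⟩ := hn
  induction j with
  | zero => simp
  | succ j ih =>
    rw [show 2 * (j + 1) + 1 = 2 * j + 1 + 2 by ring, dickson_add_two, eval_sub, eval_mul,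
      eval_mul, eval_X, eval_C]
    exact dvd_sub (dvd_mul_right _ _) (ih.mul_left N)

end Dickson

theorem le_mul_abs_eval_dickson_one_pow (N a : ℤ) {q : ℕ} (hq : Odd q) (hq₁ : 1 < q)
    (h : (dickson 1 N q).eval a ≠ 0) :
    N ≤ (q + 1) * |(dickson 1 N q).eval a| ^ q := by
  obtain ⟨k, rfl⟩ : ∃ k, q = k + 2 := ⟨q - 2, by omega⟩
  obtain ⟨w, hw⟩ := sq_dvd_eval_dickson_one_sub N a k
  have ha := dvd_eval_dickson_one_of_odd N a hq
  generalize (dickson 1 N (k + 2)).eval a = V at *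
  have hV : 1 ≤ |V| := Int.one_le_abs h
  have haV : |a| ≤ |V| := Int.le_of_dvd (abs_pos.mpr h) ((abs_dvd_abs a V).mpr ha)
  rcases eq_or_ne N 0 with rfl | hN
  · positivity
  by_cases hVa : V = a ^ (k + 2)
  · have hdvd : N ∣ (k + 2) * a ^ k :=
      ⟨w, mul_left_cancel₀ hN (by linear_combination hw - hVa)⟩
    have ha₀ : a ≠ 0 := fun h₀ => h (by simpa [h₀] using hVa)
    calc N ≤ |(k + 2) * a ^ k| :=
          Int.le_of_dvd (abs_pos.mpr (by positivity)) ((dvd_abs _ _).mpr hdvd)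
      _ = (k + 2) * |a| ^ k := by rw [abs_mul, abs_pow, abs_of_nonneg (by positivity)]
      _ ≤ (↑(k + 2) + 1) * |V| ^ (k + 2) := by
        gcongr ?_ * ?_
        · push_cast
          omega
        · exact (pow_le_pow_left₀ (abs_nonneg a) haV k).trans
            (pow_le_pow_right₀ hV (by omega))
  · have hdvd : N ∣ V - a ^ (k + 2) := ⟨N * w - (k + 2) * a ^ k, by linear_combination hw⟩
    calc N ≤ |V - a ^ (k + 2)| :=
          Int.le_of_dvd (abs_pos.mpr (sub_ne_zero.mpr hVa)) ((dvd_abs _ _).mpr hdvd)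
      _ ≤ |V| + |a| ^ (k + 2) := by rw [← abs_pow]; exact abs_sub _ _
      _ ≤ |V| ^ (k + 2) + |V| ^ (k + 2) := by
        gcongr
        exact le_self_pow₀ hV (by omega)
      _ ≤ (↑(k + 2) + 1) * |V| ^ (k + 2) := by
        rw [← two_mul]
        gcongr
        push_cast
        omega

section IsQuadraticExtension

variable {A B : Type*} [CommRing A] [Nontrivial A] [CommRing B] [Algebra A B]
  [Algebra.IsQuadraticExtension A B]

theorem sq_sub_trace_mul_add_norm_eq_zero (x : B) :
    x ^ 2 - algebraMap A B (Algebra.trace A B x) * x + algebraMap A B (Algebra.norm A x) = 0 := by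
  have b := Module.finBasisOfFinrankEq A B (Algebra.IsQuadraticExtension.finrank_eq_two A B)
  have h := Algebra.aeval_self_charpoly_lmul (R := A) x
  rw [← LinearMap.charpoly_toMatrix _ b, Matrix.charpoly_fin_two] at h
  rw [Algebra.trace_apply, LinearMap.trace_eq_matrix_trace A b, Algebra.norm_apply]
  simpa using h

theorem trace_pow_eq_eval_dickson (x : B) (n : ℕ) :
    Algebra.trace A B (x ^ n) =
      (dickson 1 (Algebra.norm A x) n).eval (Algebra.trace A B x) := by
  induction n using Nat.twoStepInduction with
  | zero =>
    rw [pow_zero, ← map_one (algebraMap A B), Algebra.trace_algebraMap,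
      Algebra.IsQuadraticExtension.finrank_eq_two]
    norm_num
  | one => simp
  | more n ih₁ ih₂ =>
    have hx : x ^ (n + 2) =
        Algebra.trace A B x • x ^ (n + 1) - Algebra.norm A x • x ^ n := by
      simp only [Algebra.smul_def]
      linear_combination x ^ n * sq_sub_trace_mul_add_norm_eq_zero (A := A) x
    rw [hx, map_sub, map_smul, map_smul, ih₁, ih₂, dickson_add_two]
    simp

end IsQuadraticExtension

theorem dvd_natCard_classGroup_of_span_eq_pow {R : Type*} [CommRing R] [IsDedekindDomain R]
    {n : ℕ} (hn : n ≠ 0) {α : R} (hα : α ≠ 0) {I : Ideal R} (hI : Ideal.span {α} = I ^ n)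
    (h : ∀ q : ℕ, q.Prime → q ∣ n → ∀ β : R, ¬ Associated (β ^ q) α) :
    n ∣ Nat.card (ClassGroup R) := by
  have hI₀ : I ≠ 0 := by
    rintro rfl
    rw [zero_pow hn] at hI
    exact hα (by simpa using hI)
  let J : nonZeroDivisors (Ideal R) := ⟨I, mem_nonZeroDivisors_of_ne_zero hI₀⟩
  suffices orderOf (ClassGroup.mk0 J) = n from this ▸ orderOf_dvd_natCard _
  refine orderOf_eq_of_pow_and_pow_div_prime hn.bot_lt ?_ fun q hq hqn hJ => ?_
  · rw [← map_pow, ClassGroup.mk0_eq_one_iff]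
    exact ⟨⟨α, hI.symm⟩⟩
  · rw [← map_pow, ClassGroup.mk0_eq_one_iff] at hJ
    obtain ⟨⟨β, hβ : I ^ (n / q) = Ideal.span {β}⟩⟩ := hJ
    refine h q hq hqn β (Ideal.span_singleton_eq_span_singleton.mp ?_)
    rw [← Ideal.span_singleton_pow, ← hβ, ← pow_mul, Nat.div_mul_cancel hqn, hI]

theorem exists_span_singleton_eq_pow_of_norm_eq_pow {A R : Type*} [CommRing A] [Nontrivial A]
    [CommRing R] [IsDedekindDomain R] [Algebra A R] [Algebra.IsQuadraticExtension A R] {α : R}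
    {M : A} {n : ℕ} (hα : Algebra.norm A α = M ^ n)
    (hM : IsCoprime (Algebra.trace A R α) M) : ∃ I : Ideal R, Ideal.span {α} = I ^ n := by
  have hprod : α * (algebraMap A R (Algebra.trace A R α) - α) = algebraMap A R M ^ n := by
    rw [← map_pow, ← hα]
    linear_combination -sq_sub_trace_mul_add_norm_eq_zero (A := A) α
  have hcop : IsCoprime α (algebraMap A R (Algebra.trace A R α) - α) := by
    have h : IsCoprime (algebraMap A R (Algebra.trace A R α)) (algebraMap A R M ^ n) :=
      (hM.map (algebraMap A R)).pow_right
    rw [← hprod] at h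
    simpa [sub_eq_add_neg] using h.of_mul_right_left.symm.add_mul_left_right (-1)
  refine exists_eq_pow_of_mul_eq_pow_of_coprime (b := Ideal.span {_})
    (c := Ideal.span {algebraMap A R M}) ((Ideal.isCoprime_span_singleton_iff _ _).mpr hcop) ?_
  rw [Ideal.span_singleton_mul_span_singleton, hprod, Ideal.span_singleton_pow]

theorem dvd_natCard_classGroup_of_norm_eq_pow {R : Type*} [CommRing R] [IsDedekindDomain R]
    [Algebra.IsQuadraticExtension ℤ R] {n : ℕ} (hn : Odd n)
    (hunits : ∀ u : Rˣ, ∃ v : Rˣ, v ^ n = u) {α : R} {M : ℤ}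
    (hα : Algebra.norm ℤ α = M ^ n) (htrace : Algebra.trace ℤ R α ≠ 0)
    (hcop : IsCoprime (Algebra.trace ℤ R α) M)
    (hM : (n + 1) * |Algebra.trace ℤ R α| ^ n < M) :
    n ∣ Nat.card (ClassGroup R) := by
  have hα₀ : α ≠ 0 := by
    rintro rfl
    simp at htrace
  have hT : 1 ≤ |Algebra.trace ℤ R α| := Int.one_le_abs htrace
  have hM₁ : 1 ≤ M := by
    have : 0 ≤ (n + 1) * |Algebra.trace ℤ R α| ^ n := by positivity
    omega
  obtain ⟨I, hI⟩ := exists_span_singleton_eq_pow_of_norm_eq_pow hα hcop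
  refine dvd_natCard_classGroup_of_span_eq_pow hn.pos.ne' hα₀ hI ?_
  rintro q hq ⟨r, rfl⟩ β ⟨u, hu⟩
  obtain ⟨hq_odd, -⟩ := Nat.odd_mul.mp hn
  have hr : r ≠ 0 := (Nat.pos_of_mul_pos_left hn.pos).ne'
  obtain ⟨γ, rfl⟩ : ∃ γ, γ ^ q = α := by
    obtain ⟨v, rfl⟩ := hunits u
    refine ⟨β * (v ^ r : Rˣ), ?_⟩
    rw [mul_pow, ← hu, ← Units.val_pow_eq_pow_val, ← pow_mul, mul_comm r]
  have hγ : Algebra.norm ℤ γ = M ^ r :=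
    hq_odd.strictMono_pow.injective (by simp only [← map_pow, hα, ← pow_mul, mul_comm])
  rw [trace_pow_eq_eval_dickson] at htrace hM hT
  refine hM.not_ge ?_
  calc M ≤ Algebra.norm ℤ γ := hγ ▸ le_self_pow₀ hM₁ hr
    _ ≤ (q + 1) * _ ^ q := le_mul_abs_eval_dickson_one_pow _ _ hq_odd hq.one_lt htrace
    _ ≤ _ := by
      have : q ≤ q * r := Nat.le_mul_of_pos_right q hr.bot_lt
      gcongr

section Sqrt

variable {F K : Type*} [Field F] [Field K] [Algebra F K] {δ : K} {Δ : F}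

theorem notMem_range_algebraMap_of_sq_eq (hδ : δ ^ 2 = algebraMap F K Δ) (hΔ : ¬ IsSquare Δ) :
    δ ∉ Set.range (algebraMap F K) := by
  rintro ⟨a, rfl⟩
  exact hΔ ⟨a, (algebraMap F K).injective (by rw [← hδ, map_mul, sq])⟩

variable [Algebra.IsQuadraticExtension F K]

theorem exists_eq_add_mul_of_notMem_range (h : δ ∉ Set.range (algebraMap F K)) (x : K) :
    ∃ a b : F, x = algebraMap F K a + algebraMap F K b * δ := by
  have hli : LinearIndependent F ![1, δ] :=
    (LinearIndependent.pair_iff' one_ne_zero).mpr fun a ha => h ⟨a, by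
      rw [← ha, Algebra.smul_def, mul_one]⟩
  have hspan := hli.span_eq_top_of_card_eq_finrank'
    (by rw [Fintype.card_fin, Algebra.IsQuadraticExtension.finrank_eq_two])
  have hx : x ∈ Submodule.span F (Set.range ![1, δ]) := hspan ▸ Submodule.mem_top
  rw [Matrix.range_cons_cons_empty, Submodule.mem_span_pair] at hx
  obtain ⟨a, b, rfl⟩ := hx
  exact ⟨a, b, by simp only [Algebra.smul_def, mul_one]⟩

theorem trace_eq_zero_of_sq_eq (hδ : δ ^ 2 = algebraMap F K Δ) (hΔ : ¬ IsSquare Δ) :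
    Algebra.trace F K δ = 0 := by
  by_contra h
  refine notMem_range_algebraMap_of_sq_eq hδ hΔ
    ⟨(Δ + Algebra.norm F δ) / Algebra.trace F K δ, ?_⟩
  rw [map_div₀, div_eq_iff (by simpa using h), map_add]
  linear_combination sq_sub_trace_mul_add_norm_eq_zero (A := F) δ - hδ

theorem trace_add_mul_of_sq_eq (hδ : δ ^ 2 = algebraMap F K Δ) (hΔ : ¬ IsSquare Δ) (a b : F) :
    Algebra.trace F K (algebraMap F K a + algebraMap F K b * δ) = 2 * a := by
  rw [map_add, Algebra.trace_algebraMap, ← Algebra.smul_def, map_smul,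
    trace_eq_zero_of_sq_eq hδ hΔ, Algebra.IsQuadraticExtension.finrank_eq_two]
  simp

theorem norm_add_mul_of_sq_eq (hδ : δ ^ 2 = algebraMap F K Δ) (hΔ : ¬ IsSquare Δ) (a b : F) :
    Algebra.norm F (algebraMap F K a + algebraMap F K b * δ) = a ^ 2 - b ^ 2 * Δ := by
  have h := sq_sub_trace_mul_add_norm_eq_zero (A := F) (algebraMap F K a + algebraMap F K b * δ)
  rw [trace_add_mul_of_sq_eq hδ hΔ] at h
  apply (algebraMap F K).injective
  simp only [map_sub, map_mul, map_pow, map_ofNat] at h ⊢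
  linear_combination h - algebraMap F K b ^ 2 * hδ

theorem exists_trace_sq_sub_four_mul_norm_eq (hδ : δ ^ 2 = algebraMap F K Δ)
    (hΔ : ¬ IsSquare Δ) (x : K) :
    ∃ b : F, Algebra.trace F K x ^ 2 - 4 * Algebra.norm F x = b ^ 2 * Δ := by
  obtain ⟨a, b, rfl⟩ :=
    exists_eq_add_mul_of_notMem_range (notMem_range_algebraMap_of_sq_eq hδ hΔ) x
  refine ⟨2 * b, ?_⟩
  rw [trace_add_mul_of_sq_eq hδ hΔ, norm_add_mul_of_sq_eq hδ hΔ]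
  ring

end Sqrt

section NumberField

theorem not_isSquare_intCast_rat_of_neg {Δ : ℤ} (hΔ : Δ < 0) : ¬ IsSquare (Δ : ℚ) :=
  fun h => (Int.cast_lt_zero.mpr hΔ).not_ge h.nonneg

variable {K : Type*} [Field K] [NumberField K] [Algebra.IsQuadraticExtension ℚ K]

instance isQuadraticExtension_ringOfIntegers : Algebra.IsQuadraticExtension ℤ (𝓞 K) where
  finrank_eq_two' := by
    rw [RingOfIntegers.rank, Algebra.IsQuadraticExtension.finrank_eq_two]

variable {δ : K} {Δ : ℤ}

theorem exists_ringOfIntegers_trace_eq_norm_eq (hδ : δ ^ 2 = Δ) (hΔ : ¬ IsSquare (Δ : ℚ))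
    {T N : ℤ} (h : Δ = T ^ 2 - 4 * N) :
    ∃ α : 𝓞 K, Algebra.trace ℤ (𝓞 K) α = T ∧ Algebra.norm ℤ α = N := by
  have hδ' : δ ^ 2 = algebraMap ℚ K Δ := by simpa using hδ
  let α : K := algebraMap ℚ K (T / 2) + algebraMap ℚ K (1 / 2) * δ
  have htrace : Algebra.trace ℚ K α = T := by
    rw [trace_add_mul_of_sq_eq hδ' hΔ]
    ring
  have hnorm : Algebra.norm ℚ α = N := by
    rw [norm_add_mul_of_sq_eq hδ' hΔ, h]
    push_cast
    ring
  have hint : IsIntegral ℤ α := by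
    refine ⟨X ^ 2 - C T * X + C N, by monicity!, ?_⟩
    have hα := sq_sub_trace_mul_add_norm_eq_zero (A := ℚ) α
    rw [htrace, hnorm] at hα
    rw [← aeval_def]
    simpa using hα
  obtain ⟨β, hβ⟩ : ∃ β : 𝓞 K, (β : K) = α := ⟨⟨α, hint⟩, rfl⟩
  refine ⟨β, Int.cast_injective (α := ℚ) ?_, Int.cast_injective (α := ℚ) ?_⟩
  · rw [Algebra.coe_trace_int, hβ, htrace]
  · rw [Algebra.coe_norm_int, hβ, hnorm]

theorem exists_ringOfIntegers_trace_sq_sub_four_mul_norm_eq (hδ : δ ^ 2 = Δ)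
    (hΔ : ¬ IsSquare (Δ : ℚ)) (x : 𝓞 K) :
    ∃ b : ℚ, (Algebra.trace ℤ (𝓞 K) x ^ 2 - 4 * Algebra.norm ℤ x : ℤ) = b ^ 2 * (Δ : ℚ) := by
  push_cast
  rw [Algebra.coe_trace_int, Algebra.coe_norm_int]
  exact exists_trace_sq_sub_four_mul_norm_eq (by simpa using hδ) hΔ _

theorem trace_sq_le_four_mul_norm (hδ : δ ^ 2 = Δ) (hΔ : Δ < 0) (x : 𝓞 K) :
    Algebra.trace ℤ (𝓞 K) x ^ 2 ≤ 4 * Algebra.norm ℤ x := by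
  obtain ⟨b, hb⟩ := exists_ringOfIntegers_trace_sq_sub_four_mul_norm_eq hδ
    (not_isSquare_intCast_rat_of_neg hΔ) x
  have : ((Algebra.trace ℤ (𝓞 K) x ^ 2 - 4 * Algebra.norm ℤ x : ℤ) : ℚ) ≤ 0 :=
    hb ▸ mul_nonpos_of_nonneg_of_nonpos (sq_nonneg b) (Int.cast_nonpos.mpr hΔ.le)
  exact sub_nonpos.mp (Int.cast_nonpos.mp this)

theorem trace_sq_sub_four_mul_norm_ne_neg_three (hδ : δ ^ 2 = Δ) (hΔ : ¬ IsSquare (Δ : ℚ))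
    (h₃ : ¬ 3 ∣ Δ) (x : 𝓞 K) :
    Algebra.trace ℤ (𝓞 K) x ^ 2 - 4 * Algebra.norm ℤ x ≠ -3 := by
  intro hx
  obtain ⟨b, hb⟩ := exists_ringOfIntegers_trace_sq_sub_four_mul_norm_eq hδ hΔ x
  have hsq : IsSquare ((-3 * Δ : ℤ) : ℚ) :=
    ⟨b * Δ, by rw [Int.cast_mul, ← hx, hb]; ring⟩
  obtain ⟨z, hz⟩ := Rat.isSquare_intCast_iff.mp hsq
  obtain ⟨y, rfl⟩ : 3 ∣ z :=
    (Int.prime_three.dvd_or_dvd ⟨-Δ, by rw [← hz]; ring⟩).elim id id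
  exact h₃ ⟨-(y * y), by linarith⟩

theorem norm_unit_eq_one (hδ : δ ^ 2 = Δ) (hΔ : Δ < 0) (u : (𝓞 K)ˣ) :
    Algebra.norm ℤ (u : 𝓞 K) = 1 := by
  have h := trace_sq_le_four_mul_norm hδ hΔ (u : 𝓞 K)
  have hu : 0 ≤ Algebra.norm ℤ (u : 𝓞 K) := by nlinarith [sq_nonneg (Algebra.trace ℤ (𝓞 K) u)]
  exact (Int.isUnit_iff.mp (u.isUnit.map (Algebra.norm ℤ))).resolve_right (by omega)

theorem unit_pow_four_eq_one (hδ : δ ^ 2 = Δ) (hΔ : Δ < 0) (h₃ : ¬ 3 ∣ Δ) (u : (𝓞 K)ˣ) :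
    u ^ 4 = 1 := by
  have hnorm := norm_unit_eq_one hδ hΔ u
  have hle := trace_sq_le_four_mul_norm hδ hΔ (u : 𝓞 K)
  have hne := trace_sq_sub_four_mul_norm_ne_neg_three hδ
    (not_isSquare_intCast_rat_of_neg hΔ) h₃ (u : 𝓞 K)
  have hu := sq_sub_trace_mul_add_norm_eq_zero (A := ℤ) (u : 𝓞 K)
  rw [hnorm] at hle hne hu
  generalize Algebra.trace ℤ (𝓞 K) (u : 𝓞 K) = t at *
  have ht : t = -2 ∨ t = 0 ∨ t = 2 := by
    have : -2 ≤ t := by nlinarith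
    have : t ≤ 2 := by nlinarith
    interval_cases t <;> simp_all
  refine Units.ext ?_
  rw [Units.val_pow_eq_pow_val, Units.val_one]
  rcases ht with rfl | rfl | rfl
  · have : (u : 𝓞 K) = -1 := by
      refine eq_neg_of_add_eq_zero_left (pow_eq_zero_iff two_ne_zero |>.mp ?_)
      simp only [map_neg, map_ofNat, map_one] at hu
      linear_combination hu
    rw [this]
    norm_num
  · simp only [map_zero, map_one] at hu
    linear_combination ((u : 𝓞 K) ^ 2 - 1) * hu
  · have : (u : 𝓞 K) = 1 := by
      refine sub_eq_zero.mp (pow_eq_zero_iff two_ne_zero |>.mp ?_)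
      simp only [map_ofNat, map_one] at hu
      linear_combination hu
    rw [this, one_pow]

theorem dvd_classNumber_of_sq_eq {n : ℕ} (hn : Odd n) {T M : ℤ} (hδ : δ ^ 2 = Δ) (hΔ : Δ < 0)
    (h : Δ = T ^ 2 - 4 * M ^ n) (h₃ : ¬ 3 ∣ Δ) (hT : T ≠ 0) (hcop : IsCoprime T M)
    (hM : (n + 1) * |T| ^ n < M) : n ∣ classNumber K := by
  obtain ⟨α, rfl, hα⟩ := exists_ringOfIntegers_trace_eq_norm_eq hδ
    (not_isSquare_intCast_rat_of_neg hΔ) h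
  rw [classNumber, ← Nat.card_eq_fintype_card]
  refine dvd_natCard_classGroup_of_norm_eq_pow hn (fun u => ⟨u ^ n, ?_⟩) hα hT hcop hM
  obtain ⟨j, rfl⟩ := hn
  rw [← pow_mul, show (2 * j + 1) * (2 * j + 1) = 4 * (j * j + j) + 1 by ring, pow_succ, pow_mul,
    unit_pow_four_eq_one hδ hΔ h₃, one_pow, one_mul]

end NumberField

section Qsqrt

theorem isQuadraticExtension_adjoin_singleton_of_sq_eq {F E : Type*} [Field F] [Field E]
    [Algebra F E] {δ : E} {Δ : F} (hδ : δ ^ 2 = algebraMap F E Δ) (hΔ : ¬ IsSquare Δ) :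
    Algebra.IsQuadraticExtension F (IntermediateField.adjoin F {δ}) := by
  have hirr : Irreducible (X ^ 2 - C Δ) :=
    (X_pow_sub_C_irreducible_iff_of_prime Nat.prime_two).mpr fun b hb => hΔ ⟨b, by rw [← hb, sq]⟩
  have hmin : X ^ 2 - C Δ = minpoly F δ :=
    minpoly.eq_of_irreducible_of_monic hirr (by simp [hδ]) (monic_X_pow_sub_C Δ two_ne_zero)
  have hint : IsIntegral F δ := .of_pow two_pos (hδ ▸ isIntegral_algebraMap)
  exact ⟨by rw [IntermediateField.adjoin.finrank hint, ← hmin, natDegree_X_pow_sub_C]⟩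

theorem isQuadraticExtension_Qsqrt {D : ℤ} (hD : D < 0) :
    Algebra.IsQuadraticExtension ℚ (Qsqrt D) :=
  isQuadraticExtension_adjoin_singleton_of_sq_eq (by simp)
    (not_isSquare_intCast_rat_of_neg hD)

theorem exists_Qsqrt_sq_eq (D : ℤ) : ∃ s : Qsqrt D, s ^ 2 = D :=
  ⟨⟨_, IntermediateField.mem_adjoin_simple_self ℚ _⟩, Subtype.ext (by simp)⟩

theorem dvd_classNumSqrt {n : ℕ} (hn : Odd n) {D T M f : ℤ} (hD : D < 0)
    (h : D = f ^ 2 * (T ^ 2 - 4 * M ^ n)) (h₃ : ¬ 3 ∣ T ^ 2 - 4 * M ^ n) (hT : T ≠ 0)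
    (hcop : IsCoprime T M) (hM : (n + 1) * |T| ^ n < M) : n ∣ classNumSqrt D := by
  have := isQuadraticExtension_Qsqrt hD
  have : NumberField (Qsqrt D) := { to_finiteDimensional := inferInstance }
  have hΔ : T ^ 2 - 4 * M ^ n < 0 := by
    by_contra! h₀
    exact (h ▸ hD).not_ge (mul_nonneg (sq_nonneg f) h₀)
  have hf : (f : Qsqrt D) ≠ 0 := by
    rw [Int.cast_ne_zero]
    rintro rfl
    simp [h] at hD
  obtain ⟨s, hs⟩ := exists_Qsqrt_sq_eq D
  have hδ : (s / f) ^ 2 = (T ^ 2 - 4 * M ^ n : ℤ) := by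
    rw [div_pow, hs, div_eq_iff (pow_ne_zero 2 hf), h]
    push_cast
    ring
  rw [classNumSqrt, Nat.card_eq_fintype_card]
  exact dvd_classNumber_of_sq_eq hn hδ hΔ rfl h₃ hT hcop hM

end Qsqrt

section Families

theorem exists_lt_and_forall_mem_dvd (S : Finset ℤ) (hS : 0 ∉ S) (C : ℤ) :
    ∃ m, C < m ∧ ∀ a ∈ S, a ∣ m := by
  refine ⟨|∏ a ∈ S, a| * (|C| + 1), ?_, fun a ha =>
    ((dvd_abs _ _).mpr (Finset.dvd_prod_of_mem id ha)).mul_right _⟩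
  have h : 1 ≤ |∏ a ∈ S, a| := Int.one_le_abs (Finset.prod_ne_zero_iff.mpr
    fun a ha h₀ => hS (h₀ ▸ ha))
  nlinarith [le_abs_self C, abs_nonneg C]

variable {n : ℕ} {k : ℤ}

theorem not_three_dvd_sq_sub_four_mul_pow (hn : Odd n) (hk : 3 ∣ k + 1) (a : ℤ) :
    ¬ 3 ∣ a ^ 2 - 4 * k ^ n := by
  have hkn : 3 ∣ k ^ n + 1 := by simpa using hk.trans (hn.add_dvd_pow_add_pow k 1)
  have ha : a ^ 2 % 3 = 0 ∨ a ^ 2 % 3 = 1 := by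
    rcases (by omega : a % 3 = 0 ∨ a % 3 = 1 ∨ a % 3 = 2) with h | h | h <;>
      simp [sq, Int.mul_emod, h]
  omega

theorem dvd_classNumSqrt_sq_sub_four_mul_pow (hn : Odd n) (hk : 3 ∣ k + 1) {a : ℤ}
    (ha : a ≠ 0) (hcop : IsCoprime a k) (hneg : a ^ 2 - 4 * k ^ n < 0)
    (hlt : (n + 1) * |a| ^ n < k) : n ∣ classNumSqrt (a ^ 2 - 4 * k ^ n) :=
  dvd_classNumSqrt (f := 1) hn hneg (by ring) (not_three_dvd_sq_sub_four_mul_pow hn hk a) ha hcop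
    hlt

theorem dvd_classNumSqrt_neg_four_mul_pow (hn : Odd n) {m : ℤ} (hm : 3 ∣ m) (hlt : n + 1 < m) :
    n ∣ classNumSqrt (-4 * (4 * m ^ n - 1) ^ n) := by
  have hmn : 3 ∣ m ^ n := dvd_pow hm hn.pos.ne'
  have hm₁ : 1 ≤ m ^ n := one_le_pow₀ (by omega)
  obtain ⟨j, hj⟩ := id hn
  refine dvd_classNumSqrt (T := 1) (M := m) (f := 2 * (4 * m ^ n - 1) ^ j) hn ?_ ?_ (by omega)
    one_ne_zero isCoprime_one_left (by simpa using hlt)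
  · have : 0 < (4 * m ^ n - 1) ^ n := pow_pos (by omega) n
    omega
  · generalize m ^ n = w
    rw [hj]
    ring

end Families

theorem infinite_quadruples_classNumber_dvd_general (n : ℕ) (hn : Odd n) (S : Finset ℤ) :
    {d : ℤ | ∀ a ∈ S, d + a ^ 2 < 0 ∧ n ∣ classNumSqrt (d + a ^ 2)}.Infinite := by
  refine Set.infinite_of_forall_exists_lt fun B => ?_
  obtain ⟨C, hC⟩ := (S.image fun a : ℤ => ((n : ℤ) + 1) * |a| ^ n + a ^ 2).exists_le
  obtain ⟨m, hm, hdvd⟩ := exists_lt_and_forall_mem_dvd (insert 3 (S.erase 0)) (by simp)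
    (max C (max (n + 1) (-B)))
  simp only [max_lt_iff] at hm
  simp only [Finset.forall_mem_insert, Finset.mem_erase] at hdvd
  obtain ⟨hCm, hnm, hBm⟩ := hm
  obtain ⟨h3m, hSm⟩ := hdvd
  have hmn : m ≤ m ^ n := le_self_pow₀ (by omega) hn.pos.ne'
  obtain ⟨k, hk⟩ : ∃ k, k = 4 * m ^ n - 1 := ⟨_, rfl⟩
  have hmk : m ≤ k := by omega
  have hkn : k ≤ k ^ n := le_self_pow₀ (by omega) hn.pos.ne'
  have hdvdk {a : ℤ} (ha : a ∣ m) : a ∣ k + 1 := by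
    rw [hk, sub_add_cancel]
    exact (dvd_pow ha hn.pos.ne').mul_left 4
  refine ⟨-4 * k ^ n, fun a ha => ?_, by omega⟩
  have haC := hC _ (Finset.mem_image_of_mem _ ha)
  have hpow : 0 ≤ ((n : ℤ) + 1) * |a| ^ n := by positivity
  have hneg : a ^ 2 - 4 * k ^ n < 0 := by omega
  rw [neg_mul, neg_add_eq_sub]
  refine ⟨hneg, ?_⟩
  rcases eq_or_ne a 0 with rfl | ha₀
  · rw [zero_pow two_ne_zero, zero_sub, ← neg_mul, hk]
    exact dvd_classNumSqrt_neg_four_mul_pow hn h3m hnm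
  · have hcop : IsCoprime a k := by
      obtain ⟨c, hc⟩ := hdvdk (hSm a ⟨ha₀, ha⟩)
      exact ⟨c, -1, by linear_combination -hc⟩
    have hlt : (n + 1) * |a| ^ n < k := by linarith [sq_nonneg a]
    exact dvd_classNumSqrt_sq_sub_four_mul_pow hn (hdvdk h3m) ha₀ hcop hneg hlt

/-- For any odd positive integer `n` and any odd prime `p`, there are infinitely many
integers `d` (with `d`, `d+1`, `d+4`, `d+4p²` all negative) such that the class numbers of
the imaginary quadratic fields `ℚ(√d)`, `ℚ(√(d+1))`, `ℚ(√(d+4))` and `ℚ(√(d+4p²))` are all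
divisible by `n`. -/
theorem infinite_quadruples_classNumber_dvd
    (n p : ℕ) (hn : Odd n) (hnpos : 0 < n) (hp : p.Prime) (hpodd : Odd p) :
    {d : ℤ | d < 0 ∧ d + 1 < 0 ∧ d + 4 < 0 ∧ d + 4 * (p : ℤ) ^ 2 < 0 ∧
      n ∣ classNumSqrt d ∧ n ∣ classNumSqrt (d + 1) ∧ n ∣ classNumSqrt (d + 4) ∧
      n ∣ classNumSqrt (d + 4 * (p : ℤ) ^ 2)}.Infinite := by
  refine (infinite_quadruples_classNumber_dvd_general n hn {0, 1, 2, 2 * (p : ℤ)}).mono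
    fun d hd => ?_
  norm_num [mul_pow] at hd ⊢
  tauto
end

section
/- For any odd positive integer n, there are infinitely many integers d (with d, d+1, d+4, d+36 and d+100 all negative) such that n divides the class number of each of the five imaginary quadratic fields ℚ(√d), ℚ(√(d+1)), ℚ(√(d+4)), ℚ(√(d+36)) and ℚ(√(d+100)); that is, the set of such integers d is infinite. -/
/-! Let `α = k + √D` with `D = k² - tⁿ < 0` and `t` prime to `2k`. Its norm is `tⁿ` and it is
coprime to its conjugate, so `(α) = Iⁿ` for an ideal `I`. The class of `I` has order exactly `n`
unless `α` is, up to a unit, a `p`-th power for some prime `p ∣ n`. If `-3D` is not a square, every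
unit `e` satisfies `e⁴ = 1` and, `p` being odd, the unit can be absorbed: `α = γᵖ`. Then the trace
`T` of `γ` divides `tr α = 2k`, while `Tᵖ ≡ tr (γᵖ) = 2k` modulo the norm of `γ`, which is
`t ^ (n / p)`. For large `t` this forces `Tᵖ = 2k`, which is absurd as `p ≥ 3` and `4 ∤ k`.

Taking `d = -tⁿ`, this covers `d + k²` for `k = 1, 2, 6, 10`. If moreover `t = aⁿ - 4`, then
`ℚ(√d) = ℚ(√-t) = ℚ(√(2² - aⁿ))` because `n` is odd, so that `d` itself is an instance with
`k = 2` and `a` in place of `t`. -/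

theorem exists_pow_eq_of_associated_pow {M : Type*} [CommMonoid M] {a b : M} {m p : ℕ}
    (hpm : p.Coprime m) (hM : ∀ e : Mˣ, e ^ m = 1) (h : Associated (b ^ p) a) :
    ∃ c, c ^ p = a := by
  obtain ⟨e, rfl⟩ := h
  obtain ⟨i, hi⟩ := exists_pow_eq_self_of_coprime
    (hpm.coprime_dvd_right (orderOf_dvd_of_pow_eq_one (hM e)))
  refine ⟨b * (e ^ i : Mˣ), ?_⟩
  rw [mul_pow, ← Units.val_pow_eq_pow_val, pow_right_comm, hi]

theorem dvd_card_classGroup_of_forall_not_associated_pow {R : Type*} [CommRing R]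
    [IsDedekindDomain R] {a b c : R} {n : ℕ} (hn : 0 < n) (ha : a ≠ 0) (hab : IsCoprime a b)
    (h : a * b = c ^ n) (hpow : ∀ p, p.Prime → p ∣ n → ∀ x, ¬ Associated (x ^ p) a) :
    n ∣ Nat.card (ClassGroup R) := by
  obtain ⟨I, hI⟩ : ∃ I, Ideal.span {a} = I ^ n :=
    exists_eq_pow_of_mul_eq_pow_of_coprime (Ideal.isCoprime_span_singleton_iff a b |>.mpr hab)
      (c := Ideal.span {c})
      (by rw [Ideal.span_singleton_mul_span_singleton, h, Ideal.span_singleton_pow])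
  have hI0 : I ∈ nonZeroDivisors (Ideal R) := by
    rw [mem_nonZeroDivisors_iff_ne_zero]
    rintro rfl
    rw [zero_pow hn.ne'] at hI
    exact ha (Ideal.span_singleton_eq_bot.mp hI)
  have pow_eq_one_iff (j : ℕ) : ClassGroup.mk0 ⟨I, hI0⟩ ^ j = 1 ↔ (I ^ j).IsPrincipal := by
    rw [← map_pow, SubmonoidClass.mk_pow, ClassGroup.mk0_eq_one_iff]
  suffices orderOf (ClassGroup.mk0 ⟨I, hI0⟩) = n from this ▸ orderOf_dvd_natCard _
  refine orderOf_eq_of_pow_and_pow_div_prime hn ?_ fun p hp hpn h1 ↦ ?_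
  · rw [pow_eq_one_iff, ← hI]
    exact ⟨⟨a, rfl⟩⟩
  · obtain ⟨x, hx⟩ := ((pow_eq_one_iff _).mp h1).principal
    rw [Ideal.submodule_span_eq] at hx
    apply hpow p hp hpn x
    rw [← Ideal.span_singleton_eq_span_singleton, ← Ideal.span_singleton_pow, hI, ← hx, ← pow_mul,
      Nat.div_mul_cancel hpn]

section QuadraticExtension

variable {A S : Type*} [CommRing A] [Nontrivial A] [CommRing S] [Algebra A S]
  [Algebra.IsQuadraticExtension A S]

-- `algebraMap A S (Algebra.trace A S x) - x` plays the role of the conjugate of `x`.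
theorem mul_trace_sub_self (x : S) :
    x * (algebraMap A S (Algebra.trace A S x) - x) = algebraMap A S (Algebra.norm A x) := by
  let b := Module.finBasisOfFinrankEq A S (Algebra.IsQuadraticExtension.finrank_eq_two A S)
  have cayley_hamilton := Matrix.aeval_self_charpoly (Algebra.leftMulMatrix b x)
  rw [Polynomial.aeval_algHom_apply, map_eq_zero_iff _ (Algebra.leftMulMatrix_injective b),
    Matrix.charpoly_fin_two, ← Algebra.trace_eq_matrix_trace, ← Algebra.norm_eq_matrix_det]
    at cayley_hamilton
  simp only [map_add, map_sub, map_mul, map_pow, Polynomial.aeval_X, Polynomial.aeval_C]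
    at cayley_hamilton
  linear_combination -cayley_hamilton

variable (A) in
theorem trace_algebraMap_of_isQuadraticExtension (a : A) :
    Algebra.trace A S (algebraMap A S a) = 2 * a := by
  rw [Algebra.trace_algebraMap, Algebra.IsQuadraticExtension.finrank_eq_two, nsmul_eq_mul,
    Nat.cast_ofNat]

theorem trace_sub_self_pow [IsDomain S] (x : S) (m : ℕ) :
    (algebraMap A S (Algebra.trace A S x) - x) ^ m =
      algebraMap A S (Algebra.trace A S (x ^ m)) - x ^ m := by
  obtain rfl | hm := eq_or_ne m 0
  · have := trace_algebraMap_of_isQuadraticExtension A (S := S) 1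
    rw [map_one, mul_one] at this
    rw [pow_zero, pow_zero, this, map_ofNat]
    norm_num
  obtain rfl | hx := eq_or_ne x 0
  · simp [hm]
  · apply mul_left_cancel₀ (pow_ne_zero m hx)
    rw [← mul_pow, mul_trace_sub_self, mul_trace_sub_self, map_pow, map_pow]

end QuadraticExtension

theorem intCast_dvd_intCast_of_free {R : Type*} [CommRing R] [Nontrivial R] [Module.Free ℤ R]
    [Module.Finite ℤ R] {a b : ℤ} (h : (a : R) ∣ b) : a ∣ b := by
  have norm_dvd := map_dvd (Algebra.norm ℤ) h
  rw [← eq_intCast (algebraMap ℤ R), ← eq_intCast (algebraMap ℤ R), Algebra.norm_algebraMap,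
    Algebra.norm_algebraMap] at norm_dvd
  exact (Int.pow_dvd_pow_iff Module.finrank_pos.ne').mp norm_dvd

section QuadraticOrder

variable {R : Type*} [CommRing R] [Algebra.IsQuadraticExtension ℤ R]

variable (R) in
theorem charZero_of_isQuadraticExtension_int : CharZero R :=
  have : Nontrivial R :=
    Module.nontrivial_of_finrank_eq_succ (Algebra.IsQuadraticExtension.finrank_eq_two ℤ R)
  Algebra.charZero_of_charZero ℤ R

theorem sq_eq_intTrace_mul_sub_intNorm (x : R) :
    x ^ 2 = (Algebra.trace ℤ R x : R) * x - (Algebra.norm ℤ x : R) := by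
  have := mul_trace_sub_self (A := ℤ) x
  simp only [eq_intCast] at this
  linear_combination -this

theorem trace_eq_zero_of_sq_eq_intCast {z : R} {D : ℤ} (hD : ¬ IsSquare D) (hz : z ^ 2 = D) :
    Algebra.trace ℤ R z = 0 := by
  have : CharZero R := charZero_of_isQuadraticExtension_int R
  set T := Algebra.trace ℤ R z
  set c := D + Algebra.norm ℤ z with hc
  have hTz : T * z = (c : R) := by
    rw [hc, Int.cast_add]
    linear_combination hz - sq_eq_intTrace_mul_sub_intNorm z
  have hTD : T ^ 2 * D = c ^ 2 := by
    rw [← Int.cast_inj (α := R)]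
    push_cast
    rw [← hz, ← mul_pow, hTz]
  by_contra hT
  obtain ⟨e, he⟩ := (Int.pow_dvd_pow_iff two_ne_zero).mp (Dvd.intro D hTD)
  refine hD ⟨e, mul_left_cancel₀ (pow_ne_zero 2 hT) ?_⟩
  rw [hTD, he]
  ring

theorem isSquare_norm_mul_norm_of_trace_eq_zero {x y : R} (hx : Algebra.trace ℤ R x = 0)
    (hy : Algebra.trace ℤ R y = 0) : IsSquare (Algebra.norm ℤ x * Algebra.norm ℤ y) := by
  have : CharZero R := charZero_of_isQuadraticExtension_int R
  set M := Algebra.norm ℤ x * Algebra.norm ℤ y with hM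
  set T := Algebra.trace ℤ R (x * y)
  have hx2 := sq_eq_intTrace_mul_sub_intNorm x
  have hy2 := sq_eq_intTrace_mul_sub_intNorm y
  simp only [hx, hy, Int.cast_zero, zero_mul, zero_sub] at hx2 hy2
  have hxy : (x * y) ^ 2 = M := by
    rw [mul_pow, hx2, hy2, hM, Int.cast_mul, neg_mul_neg]
  have hTxy : T * (x * y) = 2 * (M : R) := by
    have := sq_eq_intTrace_mul_sub_intNorm (x * y)
    rw [map_mul (Algebra.norm ℤ), ← hM] at this
    linear_combination hxy - this
  have hTM : T ^ 2 * M = (2 * M) ^ 2 := by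
    rw [← Int.cast_inj (α := R)]
    push_cast
    rw [← hTxy, mul_pow, hxy]
  obtain hM0 | hM0 := eq_or_ne M 0
  · exact hM0 ▸ IsSquare.zero
  have hT : T ^ 2 = 2 ^ 2 * M := mul_right_cancel₀ hM0 (by rw [hTM]; ring)
  obtain ⟨e, he⟩ := (Int.pow_dvd_pow_iff two_ne_zero).mp (Dvd.intro M hT.symm)
  exact ⟨e, by rw [he] at hT; linarith⟩

theorem isSquare_four_mul_norm_sub_trace_sq_mul_norm {z : R} (hz : Algebra.trace ℤ R z = 0)
    (x : R) :
    IsSquare ((4 * Algebra.norm ℤ x - Algebra.trace ℤ R x ^ 2) * Algebra.norm ℤ z) := by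
  have : CharZero R := charZero_of_isQuadraticExtension_int R
  set y : R := 2 * x - algebraMap ℤ R (Algebra.trace ℤ R x) with hy
  have hty : Algebra.trace ℤ R y = 0 := by
    rw [hy, map_sub, trace_algebraMap_of_isQuadraticExtension, two_mul, map_add]
    ring
  have hny : Algebra.norm ℤ y = 4 * Algebra.norm ℤ x - Algebra.trace ℤ R x ^ 2 := by
    have := sq_eq_intTrace_mul_sub_intNorm y
    rw [hty] at this
    rw [eq_intCast] at hy
    rw [← Int.cast_inj (α := R)]
    push_cast at this ⊢
    linear_combination this - 4 * sq_eq_intTrace_mul_sub_intNorm x -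
      (y + 2 * x - (Algebra.trace ℤ R x : R)) * hy
  exact hny ▸ isSquare_norm_mul_norm_of_trace_eq_zero hty hz

theorem norm_eq_neg_of_sq_eq_intCast {z : R} {D : ℤ} (hD : ¬ IsSquare D) (hz : z ^ 2 = D) :
    Algebra.norm ℤ z = -D := by
  have : CharZero R := charZero_of_isQuadraticExtension_int R
  have := sq_eq_intTrace_mul_sub_intNorm z
  rw [trace_eq_zero_of_sq_eq_intCast hD hz, hz, Int.cast_zero, zero_mul, zero_sub] at this
  rw [← Int.cast_inj (α := R), Int.cast_neg, this, neg_neg]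

variable [IsDomain R]

theorem units_pow_four_eq_one {z : R} {D : ℤ} (hD : D < 0) (hz : z ^ 2 = D)
    (hD3 : ¬ IsSquare (-3 * D)) (e : Rˣ) : e ^ 4 = 1 := by
  have hDsq : ¬ IsSquare D := fun h ↦ hD.not_ge h.nonneg
  set T := Algebra.trace ℤ R (e : R)
  have hsq : IsSquare ((4 * Algebra.norm ℤ (e : R) - T ^ 2) * -D) :=
    norm_eq_neg_of_sq_eq_intCast hDsq hz ▸
      isSquare_four_mul_norm_sub_trace_sq_mul_norm (trace_eq_zero_of_sq_eq_intCast hDsq hz) (e : R)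
  have hdisc : T ^ 2 ≤ 4 * Algebra.norm ℤ (e : R) := by
    have := nonneg_of_mul_nonneg_left hsq.nonneg (neg_pos.mpr hD)
    linarith
  have hnorm : Algebra.norm ℤ (e : R) = 1 :=
    (Int.isUnit_iff.mp (e.isUnit.map (Algebra.norm ℤ))).resolve_right fun h ↦ by
      nlinarith [sq_nonneg T]
  have hquad : (e : R) ^ 2 = T * e - 1 := by
    rw [sq_eq_intTrace_mul_sub_intNorm, hnorm, Int.cast_one]
  rw [hnorm] at hsq hdisc
  have hTlower : -2 ≤ T := by nlinarith
  have hTupper : T ≤ 2 := by nlinarith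
  have hTne : T ^ 2 ≠ 1 := fun h ↦ hD3 (by rw [h] at hsq; convert hsq using 1; ring)
  rw [← Units.val_inj, Units.val_pow_eq_pow_val, Units.val_one]
  obtain h | h | h : T = -2 ∨ T = 0 ∨ T = 2 := by
    have : T ≠ 1 := by rintro h; simp [h] at hTne
    have : T ≠ -1 := by rintro h; simp [h] at hTne
    omega
  all_goals rw [h] at hquad; push_cast at hquad
  · have : (e : R) + 1 = 0 := pow_eq_zero_iff two_ne_zero |>.mp (by linear_combination hquad)
    rw [eq_neg_of_add_eq_zero_left this]
    ring
  · linear_combination ((e : R) ^ 2 - 1) * hquad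
  · have : (e : R) - 1 = 0 := pow_eq_zero_iff two_ne_zero |>.mp (by linear_combination hquad)
    rw [sub_eq_zero.mp this, one_pow]

theorem trace_dvd_trace_pow (x : R) {m : ℕ} (hm : Odd m) :
    Algebra.trace ℤ R x ∣ Algebra.trace ℤ R (x ^ m) := by
  apply intCast_dvd_intCast_of_free (R := R)
  have := hm.add_dvd_pow_add_pow x (algebraMap ℤ R (Algebra.trace ℤ R x) - x)
  rwa [trace_sub_self_pow, add_sub_cancel, add_sub_cancel] at this

theorem norm_dvd_trace_pow_sub_trace_pow (x : R) {p : ℕ} (hp : p.Prime) :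
    Algebra.norm ℤ x ∣ Algebra.trace ℤ R x ^ p - Algebra.trace ℤ R (x ^ p) := by
  apply intCast_dvd_intCast_of_free (R := R)
  obtain ⟨r, hr⟩ := exists_add_pow_prime_eq hp x (algebraMap ℤ R (Algebra.trace ℤ R x) - x)
  rw [trace_sub_self_pow, add_sub_cancel, add_sub_cancel, mul_assoc (p : R),
    mul_trace_sub_self] at hr
  simp only [eq_intCast] at hr
  refine ⟨p * r, ?_⟩
  push_cast
  linear_combination hr

end QuadraticOrder

theorem not_dvd_pow_sub_two_mul {k n p : ℕ} (hk : ¬ 4 ∣ k) (hp : Odd p) (hp1 : p ≠ 1)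
    (hpn : p ≤ n) {N T : ℤ} (hN : (2 * k : ℤ) ^ n + 2 * k < N) (hT : T ∣ 2 * k) :
    ¬ N ∣ T ^ p - 2 * k := by
  intro hdvd
  have hk0 : 0 < k := Nat.pos_of_ne_zero fun h ↦ hk (h ▸ dvd_zero 4)
  have hTle : |T| ≤ 2 * k := Int.le_of_dvd (by positivity) ((abs_dvd T _).mpr hT)
  have hTp : |T ^ p| ≤ (2 * k : ℤ) ^ n := by
    rw [abs_pow]
    exact (pow_le_pow_left₀ (abs_nonneg T) hTle p).trans (pow_le_pow_right₀ (by omega) hpn)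
  have hlt : |T ^ p - 2 * k| < N := calc
    |T ^ p - 2 * k| ≤ |T ^ p| + |(2 * k : ℤ)| := abs_sub _ _
    _ ≤ (2 * k : ℤ) ^ n + 2 * k := by gcongr; exact (abs_of_nonneg (by positivity)).le
    _ < N := hN
  have heq : T ^ p = 2 * k := sub_eq_zero.mp (Int.eq_zero_of_abs_lt_dvd hdvd hlt)
  have h2T : 2 ∣ T := Int.prime_two.dvd_of_dvd_pow (Dvd.intro _ heq.symm)
  have h3p : 3 ≤ p := by
    obtain ⟨j, rfl⟩ := hp
    omega
  have h8 : (2 : ℤ) ^ 3 ∣ 2 * k :=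
    heq ▸ (pow_dvd_pow_of_dvd h2T 3).trans (pow_dvd_pow T h3p)
  omega

section SqSubPow

variable {R : Type*} [CommRing R] [Algebra.IsQuadraticExtension ℤ R] {k n t : ℕ} {z : R}

theorem pow_ne_natCast_add_of_sq_eq [IsDomain R] (hn : Odd n) (hk : ¬ 4 ∣ k)
    (ht : (2 * k) ^ n + 2 * k < t) (hD : ¬ IsSquare ((k : ℤ) ^ 2 - (t : ℤ) ^ n))
    (hz : z ^ 2 = (k : R) ^ 2 - (t : R) ^ n) {p : ℕ} (hp : p.Prime) (hpn : p ∣ n) (x : R) :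
    x ^ p ≠ k + z := by
  intro hx
  obtain ⟨m, rfl⟩ := hpn
  have hpodd : Odd p := Nat.Odd.of_mul_left hn
  have hm : m ≠ 0 := right_ne_zero_of_mul hn.pos.ne'
  have hz' : z ^ 2 = (((k : ℤ) ^ 2 - (t : ℤ) ^ (p * m) : ℤ) : R) := by
    push_cast
    exact hz
  have htrace : Algebra.trace ℤ R (x ^ p) = 2 * k := by
    have hk' : (k : R) = algebraMap ℤ R k := by simp
    rw [hx, map_add, trace_eq_zero_of_sq_eq_intCast hD hz', hk',
      trace_algebraMap_of_isQuadraticExtension, add_zero]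
  have hnorm : Algebra.norm ℤ x = (t : ℤ) ^ m := by
    have : CharZero R := charZero_of_isQuadraticExtension_int R
    apply hpodd.pow_injective
    dsimp only
    rw [← map_pow, ← Int.cast_inj (α := R), ← eq_intCast (algebraMap ℤ R), ← mul_trace_sub_self,
      htrace, hx, eq_intCast]
    push_cast
    linear_combination -hz
  have hTdvd := trace_dvd_trace_pow x hpodd
  have hNdvd := norm_dvd_trace_pow_sub_trace_pow x hp
  rw [htrace] at hTdvd hNdvd
  refine not_dvd_pow_sub_two_mul hk hpodd hp.ne_one (Nat.le_of_dvd hn.pos (dvd_mul_right p m))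
    ?_ hTdvd hNdvd
  rw [hnorm]
  exact_mod_cast ht.trans_le (Nat.le_self_pow hm t)

theorem dvd_card_classGroup_of_sq_eq [IsDedekindDomain R] (hn : Odd n) (hk : ¬ 4 ∣ k)
    (hcop : t.Coprime (2 * k)) (ht : (2 * k) ^ n + 2 * k < t) (hD : (k : ℤ) ^ 2 < (t : ℤ) ^ n)
    (hD3 : ¬ IsSquare (-3 * ((k : ℤ) ^ 2 - (t : ℤ) ^ n)))
    (hz : z ^ 2 = (k : R) ^ 2 - (t : R) ^ n) : n ∣ Nat.card (ClassGroup R) := by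
  have : CharZero R := charZero_of_isQuadraticExtension_int R
  have hD0 : (k : ℤ) ^ 2 - (t : ℤ) ^ n < 0 := sub_neg.mpr hD
  have hmul : (k + z) * (k - z) = (t : R) ^ n := by linear_combination -hz
  have hne : (k + z : R) ≠ 0 := by
    refine left_ne_zero_of_mul (b := k - z) (hmul ▸ pow_ne_zero n (Nat.cast_ne_zero.mpr ?_))
    omega
  have hcoprime : IsCoprime (k + z : R) (k - z) := by
    have h := (Nat.isCoprime_iff_coprime.mpr (hcop.pow_left n)).map (Int.castRingHom R)
    push_cast [eq_intCast] at h
    rw [← hmul, show (2 * k : R) = k - z + (k + z) * 1 by ring] at h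
    exact h.of_mul_left_left.of_add_mul_left_right
  refine dvd_card_classGroup_of_forall_not_associated_pow hn.pos hne hcoprime hmul
    fun p hp hpn x hx ↦ ?_
  have hp4 : p.Coprime 4 := Nat.Coprime.pow_right 2 (hn.of_dvd_nat hpn).coprime_two_right
  have hunits := units_pow_four_eq_one (R := R) (z := z) hD0 (by push_cast; exact hz) hD3
  obtain ⟨y, hy⟩ := exists_pow_eq_of_associated_pow hp4 hunits hx
  exact pow_ne_natCast_add_of_sq_eq hn hk ht (fun h ↦ hD0.not_ge h.nonneg) hz hp hpn y hy

end SqSubPow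

open IntermediateField in
theorem finrank_adjoin_simple_of_pow_eq {F E : Type*} [Field F] [Field E] [Algebra F E] {p : ℕ}
    (hp : p.Prime) {a : F} (ha : ∀ b, b ^ p ≠ a) {x : E} (hx : x ^ p = algebraMap F E a) :
    Module.finrank F F⟮x⟯ = p := by
  have hint : IsIntegral F x := IsIntegral.of_pow hp.pos (hx ▸ isIntegral_algebraMap)
  rw [adjoin.finrank hint,
    ← minpoly.eq_of_irreducible_of_monic (X_pow_sub_C_irreducible_of_prime hp ha) (by simp [hx])
      (Polynomial.monic_X_pow_sub_C a hp.ne_zero), Polynomial.natDegree_X_pow_sub_C]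

theorem intCast_cpow_one_half_sq (d : ℤ) : ((d : ℂ) ^ ((1 : ℂ) / 2)) ^ 2 = d := by
  simp

theorem exists_mem_Qsqrt_sq_eq (d : ℤ) : ∃ x ∈ Qsqrt d, x ^ 2 = d :=
  ⟨_, IntermediateField.mem_adjoin_simple_self ℚ _, intCast_cpow_one_half_sq d⟩

theorem Qsqrt_le_of_mem_of_sq_eq {K : IntermediateField ℚ ℂ} {d : ℤ} {x : ℂ} (hx : x ∈ K)
    (hxd : x ^ 2 = d) : Qsqrt d ≤ K := by
  rw [Qsqrt, IntermediateField.adjoin_simple_le_iff]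
  obtain h | h := sq_eq_sq_iff_eq_or_eq_neg.mp ((intCast_cpow_one_half_sq d).trans hxd.symm)
  · exact h ▸ hx
  · exact h ▸ neg_mem hx

theorem Qsqrt_sq_mul {s : ℤ} (hs : s ≠ 0) (d : ℤ) : Qsqrt (s ^ 2 * d) = Qsqrt d := by
  obtain ⟨x, hx, hxd⟩ := exists_mem_Qsqrt_sq_eq d
  obtain ⟨y, hy, hyd⟩ := exists_mem_Qsqrt_sq_eq (s ^ 2 * d)
  apply le_antisymm
  · refine Qsqrt_le_of_mem_of_sq_eq (mul_mem (intCast_mem _ s) hx) ?_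
    rw [mul_pow, hxd]
    push_cast
    rfl
  · refine Qsqrt_le_of_mem_of_sq_eq (div_mem hy (intCast_mem _ s)) ?_
    have : (s : ℂ) ≠ 0 := Int.cast_ne_zero.mpr hs
    rw [div_pow, hyd]
    push_cast
    field_simp

theorem classNumSqrt_sq_mul {s : ℤ} (hs : s ≠ 0) (d : ℤ) :
    classNumSqrt (s ^ 2 * d) = classNumSqrt d :=
  congrArg (fun K : IntermediateField ℚ ℂ ↦ Nat.card (ClassGroup (NumberField.RingOfIntegers K)))
    (Qsqrt_sq_mul hs d)

theorem finrank_Qsqrt {d : ℤ} (hd : ¬ IsSquare d) : Module.finrank ℚ (Qsqrt d) = 2 :=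
  finrank_adjoin_simple_of_pow_eq (a := (d : ℚ)) Nat.prime_two
    (fun b hb ↦ hd (Rat.isSquare_intCast_iff.mp ⟨b, by rw [← hb, sq]⟩))
    (by rw [intCast_cpow_one_half_sq, map_intCast])

theorem exists_ringOfIntegers_Qsqrt_sq_eq (d : ℤ) :
    ∃ z : NumberField.RingOfIntegers (Qsqrt d), z ^ 2 = d := by
  obtain ⟨x, hx, hxd⟩ := exists_mem_Qsqrt_sq_eq d
  have hxd' : (⟨x, hx⟩ : Qsqrt d) ^ 2 = d := Subtype.ext (by simpa using hxd)
  have hint : IsIntegral ℤ (⟨x, hx⟩ : Qsqrt d) :=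
    IsIntegral.of_pow two_pos (hxd' ▸ isIntegral_algebraMap (R := ℤ) (x := d))
  exact ⟨⟨_, hint⟩, NumberField.RingOfIntegers.ext hxd'⟩

theorem dvd_classNumSqrt_sq_sub_pow {k n t : ℕ} (hn : Odd n) (hk : ¬ 4 ∣ k)
    (hcop : t.Coprime (2 * k)) (ht : (2 * k) ^ n + 2 * k < t) (hD : (k : ℤ) ^ 2 < (t : ℤ) ^ n)
    (hD3 : ¬ IsSquare (-3 * ((k : ℤ) ^ 2 - (t : ℤ) ^ n))) :
    n ∣ classNumSqrt ((k : ℤ) ^ 2 - (t : ℤ) ^ n) := by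
  set D := (k : ℤ) ^ 2 - (t : ℤ) ^ n with hDdef
  have hrank : Module.finrank ℚ (Qsqrt D) = 2 :=
    finrank_Qsqrt fun h ↦ (sub_neg.mpr hD).not_ge h.nonneg
  have : FiniteDimensional ℚ (Qsqrt D) := Module.finite_of_finrank_eq_succ hrank
  have : NumberField (Qsqrt D) := {}
  have : Algebra.IsQuadraticExtension ℤ (NumberField.RingOfIntegers (Qsqrt D)) :=
    ⟨by rw [NumberField.RingOfIntegers.rank, hrank]⟩
  obtain ⟨z, hz⟩ := exists_ringOfIntegers_Qsqrt_sq_eq D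
  exact dvd_card_classGroup_of_sq_eq hn hk hcop ht hD hD3 (by rw [hz, hDdef]; push_cast; rfl)

theorem pow_modEq_self_of_odd {a m n : ℕ} (ha : a ^ 2 ≡ 1 [MOD m]) (hn : Odd n) :
    a ^ n ≡ a [MOD m] := by
  obtain ⟨j, rfl⟩ := hn
  rw [pow_succ, pow_mul]
  simpa only [one_pow, one_mul] using (ha.pow j).mul_right a

theorem emod_eight_of_isSquare {x : ℤ} (hx : IsSquare x) : x % 8 = 0 ∨ x % 8 = 1 ∨ x % 8 = 4 := by
  obtain ⟨w, rfl⟩ := hx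
  have : w % 8 = 0 ∨ w % 8 = 1 ∨ w % 8 = 2 ∨ w % 8 = 3 ∨ w % 8 = 4 ∨ w % 8 = 5 ∨ w % 8 = 6 ∨
    w % 8 = 7 := by omega
  rcases this with hw | hw | hw | hw | hw | hw | hw | hw <;> simp [Int.mul_emod, hw]

theorem not_isSquare_of_prime_mul {p x : ℤ} (hp : Prime p) (hx : ¬ p ∣ x) :
    ¬ IsSquare (p * x) := by
  rintro ⟨w, hw⟩
  obtain ⟨v, rfl⟩ : p ∣ w := hp.dvd_of_dvd_pow (n := 2) (Dvd.intro x (by rw [hw, sq]))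
  exact hx ⟨v * v, mul_left_cancel₀ hp.ne_zero (by rw [hw]; ring)⟩

theorem dvd_classNumSqrt_sq_sub_pow_of_mod_eight {k n t : ℕ} (hn : Odd n) (ht : t % 8 = 3)
    (hk : ¬ 4 ∣ k) (hcop : t.Coprime k) (hbound : (2 * k) ^ n + 2 * k < t)
    (hD : (k : ℤ) ^ 2 < (t : ℤ) ^ n) : n ∣ classNumSqrt ((k : ℤ) ^ 2 - (t : ℤ) ^ n) := by
  have htodd : Odd t := Nat.odd_iff.mpr (by omega)
  have ht8 : (t : ℤ) ^ n % 8 = 3 := by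
    have : t ≡ 3 [MOD 8] := ht
    exact_mod_cast (this.pow n).trans (pow_modEq_self_of_odd (by decide) hn)
  have hk8 : (k : ℤ) ^ 2 % 8 = 1 ∨ (k : ℤ) ^ 2 % 8 = 4 := by
    have : (k : ℤ) % 8 = 1 ∨ (k : ℤ) % 8 = 2 ∨ (k : ℤ) % 8 = 3 ∨ (k : ℤ) % 8 = 5 ∨
      (k : ℤ) % 8 = 6 ∨ (k : ℤ) % 8 = 7 := by omega
    rcases this with h | h | h | h | h | h <;> simp [pow_two, Int.mul_emod, h]
  -- `t ^ n ≡ 3` and `k ^ 2 ≡ 1, 4` modulo `8` give `-3 * (k ^ 2 - t ^ n) ≡ 6, 5`, not squares.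
  refine dvd_classNumSqrt_sq_sub_pow hn hk (htodd.coprime_two_right.mul_right hcop) hbound hD
    fun hsq ↦ ?_
  have := emod_eight_of_isSquare hsq
  omega

theorem dvd_classNumSqrt_neg_pow {a n t : ℕ} (hn : Odd n) (hta : a ^ n = t + 4) (ha : Odd a)
    (ht : ¬ 3 ∣ t) (hbound : 4 ^ n + 4 < a) : n ∣ classNumSqrt (-(t : ℤ) ^ n) := by
  have ht0 : t ≠ 0 := fun h ↦ ht (h ▸ dvd_zero 3)
  have hta' : (a : ℤ) ^ n = t + 4 := mod_cast hta
  have hD : ((2 : ℕ) : ℤ) ^ 2 - (a : ℤ) ^ n = -t := by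
    rw [hta']
    push_cast
    ring
  have hsq : classNumSqrt (-(t : ℤ) ^ n) = classNumSqrt (((2 : ℕ) : ℤ) ^ 2 - (a : ℤ) ^ n) := by
    obtain ⟨j, hj⟩ := hn
    rw [hD, ← classNumSqrt_sq_mul (pow_ne_zero j (Nat.cast_ne_zero.mpr ht0)) (-(t : ℤ)), hj]
    ring_nf
  rw [hsq]
  refine dvd_classNumSqrt_sq_sub_pow hn (by decide)
    (Nat.Coprime.pow_right 2 ha.coprime_two_right) hbound (by omega) ?_
  rw [hD, neg_mul_neg]
  exact not_isSquare_of_prime_mul Int.prime_three (by omega)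

theorem exists_pow_eq_add_four {n : ℕ} (hn : Odd n) (B : ℕ) :
    ∃ a t : ℕ, B < a ∧ Odd a ∧ a ^ n = t + 4 ∧ t % 120 = 67 := by
  -- `71 ^ 2 ≡ 1` modulo `120`, while `67 = 71 - 4` is prime to `120` and `3` modulo `8`.
  have ha : (120 * B + 71) ≡ 71 [MOD 120] := by simp [Nat.ModEq]
  have hpow : (120 * B + 71) ^ n % 120 = 71 :=
    (ha.pow n).trans (pow_modEq_self_of_odd (by decide) hn)
  exact ⟨120 * B + 71, (120 * B + 71) ^ n - 4, by omega, by grind, by omega, by omega⟩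

/-- For any odd positive integer `n`, there are infinitely many integers `d` (with `d`,
`d+1`, `d+4`, `d+36`, `d+100` all negative) such that the class numbers of the imaginary
quadratic fields `ℚ(√d)`, `ℚ(√(d+1))`, `ℚ(√(d+4))`, `ℚ(√(d+36))` and `ℚ(√(d+100))` are all
divisible by `n`. -/
theorem infinite_quintuples_classNumber_dvd (n : ℕ) (hn : Odd n) (hnpos : 0 < n) :
    {d : ℤ | d < 0 ∧ d + 1 < 0 ∧ d + 4 < 0 ∧ d + 36 < 0 ∧ d + 100 < 0 ∧
      n ∣ classNumSqrt d ∧ n ∣ classNumSqrt (d + 1) ∧ n ∣ classNumSqrt (d + 4) ∧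
      n ∣ classNumSqrt (d + 36) ∧ n ∣ classNumSqrt (d + 100)}.Infinite := by
  refine Set.infinite_of_forall_exists_lt fun B ↦ ?_
  obtain ⟨a, t, hBa, ha, hta, ht⟩ := exists_pow_eq_add_four hn (20 ^ n + 200 + B.natAbs)
  have h20 : 0 < 20 ^ n := by positivity
  have hat : a ≤ t + 4 := hta ▸ Nat.le_self_pow hn.pos.ne' a
  have htn : (t : ℤ) ≤ (t : ℤ) ^ n := mod_cast Nat.le_self_pow hn.pos.ne' t
  have hcop : t.Coprime 120 := (Nat.ModEq.gcd_eq (b := 67) ht).trans (by norm_num)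
  have hdvd (k : ℕ) (hk : ¬ 4 ∣ k) (hk120 : k ∣ 120) (hk10 : k ≤ 10) :
      n ∣ classNumSqrt (-(t : ℤ) ^ n + (k : ℤ) ^ 2) := by
    have hk20 : (2 * k) ^ n ≤ 20 ^ n := Nat.pow_le_pow_left (by omega) n
    have hk100 : (k : ℤ) ^ 2 ≤ 10 ^ 2 := by gcongr; exact_mod_cast hk10
    rw [neg_add_eq_sub]
    exact dvd_classNumSqrt_sq_sub_pow_of_mod_eight hn (by omega) hk
      (hcop.coprime_dvd_right hk120) (by omega) (by omega)
  have hself : n ∣ classNumSqrt (-(t : ℤ) ^ n) := by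
    have : 4 ^ n ≤ 20 ^ n := Nat.pow_le_pow_left (by norm_num) n
    exact dvd_classNumSqrt_neg_pow hn hta ha (by omega) (by omega)
  refine ⟨-(t : ℤ) ^ n, ⟨by omega, by omega, by omega, by omega, by omega, hself, ?_⟩, by omega⟩
  exact ⟨hdvd 1 (by decide) (by decide) (by decide), hdvd 2 (by decide) (by decide) (by decide),
    hdvd 6 (by decide) (by decide) (by decide), hdvd 10 (by decide) (by decide) (by decide)⟩
end

section
/- Let ℓ > 1 and n > 1 be odd integers with ℓ ≡ 3 (mod 4). For x ∈ {3, 5} with gcd(ℓ, x) = 1, the class number of the imaginary quadratic field ℚ(√(x^2 − ℓ^n)) is divisible by n, except in the case (ℓ, n) = (3, 3). -/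
/-!
Put `D = x² - ℓⁿ`. In the ring of integers of `ℚ(√D)` the coprime elements `x ± √D` have product
`ℓⁿ`, so `(x + √D) = Jⁿ` for an ideal `J`. If the class of `J` has order less than `n`, then,
as the only units are `±1`, `x + √D = β ^ p` for a prime `p ∣ n`. Here `β = a + √d` with integers
`a` and `d`, so `x = Re (a + √d) ^ p`, where the norm `L = a² - d` satisfies `L ≡ 3 (mod 4)`.

Reading `x = Re (a + √d) ^ p` modulo `p`, modulo powers of `2` and modulo `x` leaves
`L = p = 3` or `x = a = 5` with `p ≡ 29 (mod 40)`. In the latter case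
`25 + (L - 25) Y² = L ^ p` for an integer `Y`. For `L < 400000` this contradicts congruences
for the linear recurrence satisfied by `Re (5 + √d) ^ m`. For larger `L`, the rational number
`Y / L ^ ((p - 1) / 2)` would be too good an approximation to a number close to `√(1 - 25 / L)`:
it is separated from it by the Padé approximants to the square root, which are nonzero for
`2`-adic reasons.
-/

/-! ### Powers in `ℤ√d` -/

section ZsqrtdPow

variable {d : ℤ} (z : ℤ√d)

theorem sq_zsqrtd_eq : z ^ 2 = 2 * z.re * z - z.norm := by
  ext <;> simp [sq, Zsqrtd.norm_def] <;> ring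

theorem zsqrtd_pow_add_two (n : ℕ) : z ^ (n + 2) = 2 * z.re * z ^ (n + 1) - z.norm * z ^ n := by
  rw [pow_add, sq_zsqrtd_eq]
  ring

theorem re_pow_add_two (n : ℕ) :
    (z ^ (n + 2)).re = 2 * z.re * (z ^ (n + 1)).re - z.norm * (z ^ n).re := by
  simp [zsqrtd_pow_add_two]

theorem re_sq_zsqrtd : (z ^ 2).re = z.re * (2 * z.re) - z.norm := by
  simpa [mul_comm, mul_left_comm] using re_pow_add_two z 0

theorem im_sq_zsqrtd : (z ^ 2).im = z.re * (2 * z.im) := by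
  rw [sq, Zsqrtd.im_mul]
  ring

theorem im_dvd_im_pow (n : ℕ) : z.im ∣ (z ^ n).im := by
  induction n with
  | zero => simp
  | succ n ih =>
    rw [pow_succ, Zsqrtd.im_mul]
    exact dvd_add (dvd_mul_left _ _) (ih.mul_right _)

theorem eq_re_add_im : z = (z.re : ℤ√d) + ⟨0, z.im⟩ := by
  ext <;> simp

theorem mk_zero_pow_two_mul (b : ℤ) (m : ℕ) :
    (⟨0, b⟩ : ℤ√d) ^ (2 * m) = ((b ^ 2 * d) ^ m : ℤ) := by
  rw [pow_mul, Int.cast_pow]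
  congr 1
  ext
  · rw [sq, Zsqrtd.re_mul, Zsqrtd.re_intCast]
    ring
  · rw [sq, Zsqrtd.im_mul, Zsqrtd.im_intCast]
    ring

theorem re_mk_zero_pow (b : ℤ) (m : ℕ) : ((⟨0, b⟩ : ℤ√d) ^ (2 * m + 1)).re = 0 := by
  rw [pow_succ, mk_zero_pow_two_mul, Zsqrtd.re_smul, mul_zero]

theorem prime_mul_re_dvd_re_pow_sub {p : ℕ} (hp : p.Prime) (hodd : Odd p) :
    p * z.re ∣ (z ^ p).re - z.re ^ p := by
  obtain ⟨m, rfl⟩ := hodd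
  obtain ⟨r, hr⟩ := exists_add_pow_prime_eq hp (z.re : ℤ√d) ⟨0, z.im⟩
  refine ⟨((⟨0, z.im⟩ : ℤ√d) * r).re, ?_⟩
  have hexp : z ^ (2 * m + 1) = ((z.re ^ (2 * m + 1) : ℤ) : ℤ√d) + ⟨0, z.im⟩ ^ (2 * m + 1)
      + (((2 * m + 1 : ℕ) * z.re : ℤ) : ℤ√d) * (⟨0, z.im⟩ * r) := by
    conv_lhs => rw [eq_re_add_im z, hr]
    push_cast
    ring
  rw [hexp, Zsqrtd.re_add, Zsqrtd.re_add, Zsqrtd.re_smul, Zsqrtd.re_intCast, re_mk_zero_pow]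
  ring

theorem sq_re_dvd_re_pow_sub (m : ℕ) :
    z.re ^ 2 ∣ (z ^ (2 * m + 1)).re - (2 * m + 1) * z.re * (z.im ^ 2 * d) ^ m := by
  obtain ⟨k, hk⟩ := Polynomial.powAddExpansion (⟨0, z.im⟩ : ℤ√d) z.re (2 * m + 1)
  refine ⟨k.re, ?_⟩
  have hexp : z ^ (2 * m + 1) = ⟨0, z.im⟩ ^ (2 * m + 1)
      + (((2 * m + 1) * z.re * (z.im ^ 2 * d) ^ m : ℤ) : ℤ√d) + ((z.re ^ 2 : ℤ) : ℤ√d) * k := by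
    conv_lhs => rw [eq_re_add_im z, add_comm, hk]
    rw [Nat.add_sub_cancel, mk_zero_pow_two_mul]
    push_cast
    ring
  rw [hexp, Zsqrtd.re_add, Zsqrtd.re_add, Zsqrtd.re_smul, Zsqrtd.re_intCast, re_mk_zero_pow]
  ring

variable {z}

theorem re_pow_modEq_neg_re_of_norm_modEq_three (hN : z.norm ≡ 3 [ZMOD 4]) (k : ℕ) :
    (z ^ (4 * k + 3)).re ≡ -z.re [ZMOD 4] := by
  obtain ⟨c, hc⟩ := hN.symm.dvd
  have hN' : z.norm = 3 + 4 * c := by linarith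
  induction k with
  | zero =>
    refine (Int.modEq_iff_dvd.mpr ⟨z.re ^ 3 - 3 * z.re * c - 2 * z.re, ?_⟩).symm
    rw [re_pow_add_two z 1, re_pow_add_two z 0, hN']
    simp only [zero_add, pow_one, pow_zero, Zsqrtd.re_one]
    ring
  | succ k ih =>
    refine .trans (Int.modEq_iff_dvd.mpr ⟨(2 * z.re ^ 3 - z.re * z.norm) * (z ^ (4 * k + 4)).re
      + (2 + 6 * c + 4 * c ^ 2 - z.re ^ 2 * z.norm) * (z ^ (4 * k + 3)).re, ?_⟩).symm ih
    rw [show 4 * (k + 1) + 3 = 4 * k + 5 + 2 by ring, re_pow_add_two z (4 * k + 5),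
      re_pow_add_two z (4 * k + 4), re_pow_add_two z (4 * k + 3), hN']
    ring

/-! ### Lifting the exponent for the imaginary part -/

theorem exists_im_pow_eq (n : ℕ) :
    ∃ t : ℤ, (z ^ n).im = z.im * (n * z.re ^ (n - 1) + z.im * t) := by
  obtain ⟨k, hk⟩ := Polynomial.powAddExpansion (z.re : ℤ√d) ⟨0, z.im⟩ n
  refine ⟨d * k.im, ?_⟩
  have hexp : z ^ n = ((z.re ^ n : ℤ) : ℤ√d) + ((n * z.re ^ (n - 1) : ℤ) : ℤ√d) * ⟨0, z.im⟩
      + (((z.im ^ 2 * d) ^ 1 : ℤ) : ℤ√d) * k := by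
    conv_lhs => rw [eq_re_add_im z, hk]
    rw [← mk_zero_pow_two_mul]
    push_cast
    ring
  rw [hexp, Zsqrtd.im_add, Zsqrtd.im_add, Zsqrtd.im_smul, Zsqrtd.im_smul, Zsqrtd.im_intCast]
  ring

theorem exists_im_pow_eq_of_odd_dvd {q : ℕ} (hq : Odd q) (hdvd : (q : ℤ) ∣ z.im) :
    ∃ t : ℤ, (z ^ q).im = q * z.im * (z.re ^ (q - 1) + q * t) := by
  obtain ⟨b, hb⟩ := hdvd
  have hz : (z.re : ℤ√d) + q * ⟨0, b⟩ = z := by ext <;> simp [hb]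
  obtain ⟨t, ht⟩ := odd_sq_dvd_geom_sum₂_sub (z.re : ℤ√d) ⟨0, b⟩ hq
  rw [hz] at ht
  refine ⟨t.re, ?_⟩
  have hexp : z ^ q = ((z.re ^ q : ℤ) : ℤ√d)
      + ⟨0, z.im⟩ * (((q * z.re ^ (q - 1) : ℤ) : ℤ√d) + ((q ^ 2 : ℤ) : ℤ√d) * t) := by
    have hgeom := geom_sum₂_mul z (z.re : ℤ√d) q
    have hsub : z - z.re = ⟨0, z.im⟩ := by ext <;> simp
    rw [hsub, eq_add_of_sub_eq ht] at hgeom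
    rw [eq_add_of_sub_eq hgeom.symm]
    push_cast
    ring
  rw [hexp, Zsqrtd.im_add, Zsqrtd.im_mul, Zsqrtd.re_add, Zsqrtd.re_smul, Zsqrtd.re_intCast,
    Zsqrtd.im_intCast]
  ring

theorem pow_dvd_of_pow_mul_im_dvd_im_pow {q : ℕ} (hq : q.Prime) (hodd : Odd q)
    (him : (q : ℤ) ∣ z.im) (him0 : z.im ≠ 0) (hre : ¬ (q : ℤ) ∣ z.re) {k m : ℕ}
    (h : (q ^ k : ℤ) * z.im ∣ (z ^ m).im) : q ^ k ∣ m := by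
  have hqZ : Prime (q : ℤ) := Nat.prime_iff_prime_int.mp hq
  induction k generalizing z m with
  | zero => simp
  | succ k ih =>
    have hqm : q ∣ m := by
      obtain ⟨t, ht⟩ := exists_im_pow_eq (z := z) m
      rw [ht, mul_comm, mul_dvd_mul_iff_left him0] at h
      have hq1 : (q : ℤ) ∣ m * z.re ^ (m - 1) :=
        (dvd_add_left (him.mul_right t)).mp ((dvd_pow_self _ k.succ_ne_zero).trans h)
      exact Int.natCast_dvd_natCast.mp
        ((hqZ.dvd_or_dvd hq1).resolve_right fun hdvd => hre (hqZ.dvd_of_dvd_pow hdvd))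
    obtain ⟨m, rfl⟩ := hqm
    obtain ⟨t, ht⟩ := exists_im_pow_eq_of_odd_dvd hodd him
    set u := z.re ^ (q - 1) + q * t
    have hu : ¬ (q : ℤ) ∣ u := fun hdvd =>
      hre (hqZ.dvd_of_dvd_pow ((dvd_add_left (dvd_mul_right _ t)).mp hdvd))
    have hu0 : u ≠ 0 := fun h0 => hu (h0 ▸ dvd_zero _)
    obtain ⟨s, hs⟩ := im_dvd_im_pow (z ^ q) m
    have hks : (q ^ k : ℤ) ∣ s := by
      rw [pow_mul, hs, ht, show (q : ℤ) ^ (k + 1) * z.im = q * z.im * q ^ k by ring,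
        mul_assoc (q * z.im), mul_dvd_mul_iff_left (mul_ne_zero hqZ.ne_zero him0)] at h
      exact hqZ.pow_dvd_of_dvd_mul_left k hu h
    have hre' : ¬ (q : ℤ) ∣ (z ^ q).re := by
      obtain ⟨m, rfl⟩ := hodd
      refine fun hdvd => hre (hqZ.dvd_of_dvd_pow (n := 2 * m + 1) ?_)
      have := (dvd_mul_right _ z.re).trans (prime_mul_re_dvd_re_pow_sub z hq ⟨m, rfl⟩)
      simpa using dvd_sub hdvd this
    have him' : (q : ℤ) ∣ (z ^ q).im := ht ▸ (dvd_mul_right _ z.im).mul_right u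
    have him0' : (z ^ q).im ≠ 0 := ht ▸ mul_ne_zero (mul_ne_zero hqZ.ne_zero him0) hu0
    have hdvd : (q ^ k : ℤ) * (z ^ q).im ∣ ((z ^ q) ^ m).im := by
      rw [hs, mul_comm]
      exact mul_dvd_mul_left _ hks
    exact pow_succ' q k ▸ mul_dvd_mul_left q (ih him' him0' hre' hdvd)

theorem pow_succ_dvd_sq_pow_sub_one {q : ℕ} (hq : q.Prime) (hre : z.re = q) {k m : ℕ}
    (hNm : (-z.norm) ^ m ≡ 1 [ZMOD q]) (hdvd : q ^ k ∣ m) :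
    (q : ℤ√d) ^ (k + 1) ∣ (z ^ 2) ^ m - 1 := by
  have : Fact q.Prime := ⟨hq⟩
  obtain ⟨t, rfl⟩ := hdvd
  have hNt : (q : ℤ) ∣ (-z.norm) ^ t - 1 := by
    rw [← ZMod.intCast_zmod_eq_zero_iff_dvd]
    have h := (ZMod.intCast_eq_intCast_iff _ _ q).mpr hNm
    push_cast at h ⊢
    rwa [mul_comm, pow_mul, ZMod.pow_card_pow, ← sub_eq_zero] at h
  have hsq : (q : ℤ√d) ∣ z ^ 2 - (-z.norm : ℤ) := ⟨2 * z, by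
    rw [sq_zsqrtd_eq, hre]
    push_cast
    ring⟩
  have hone : (q : ℤ√d) ∣ (z ^ 2) ^ t - 1 := by
    have h := dvd_add (hsq.trans (sub_dvd_pow_sub_pow _ _ t))
      ((Zsqrtd.intCast_dvd_intCast _ _).mpr hNt)
    push_cast at h
    rwa [sub_add_sub_cancel] at h
  have h := dvd_sub_pow_of_dvd_sub hone k
  rwa [one_pow, ← pow_mul, mul_comm t] at h

theorem pow_add_two_dvd_im_sq_pow {q : ℕ} (hq : q.Prime) (hre : z.re = q)
    (hdim : ¬ (q : ℤ) ∣ d * z.im) {k m : ℕ} (hNm : (-z.norm) ^ m ≡ 1 [ZMOD q])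
    (hpow : (z ^ (2 * m + 1)).re = q) (hdvd : q ^ k ∣ m) :
    (q ^ (k + 2) : ℤ) ∣ ((z ^ 2) ^ m).im := by
  have hsplit : q * (((z ^ 2) ^ m).re - 1) = -(d * z.im * ((z ^ 2) ^ m).im) := by
    rw [pow_succ, pow_mul, Zsqrtd.re_mul, hre] at hpow
    linear_combination hpow
  have hre1 : (q ^ (k + 1) : ℤ) ∣ ((z ^ 2) ^ m).re - 1 := by
    have h : ((q ^ (k + 1) : ℤ) : ℤ√d) ∣ (z ^ 2) ^ m - 1 :=
      mod_cast pow_succ_dvd_sq_pow_sub_one hq hre hNm hdvd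
    simpa using ((Zsqrtd.intCast_dvd _ _).mp h).1
  refine (Nat.prime_iff_prime_int.mp hq).pow_dvd_of_dvd_mul_left (k + 2) hdim (dvd_neg.mp ?_)
  rw [← hsplit, pow_succ']
  exact mul_dvd_mul_left _ hre1

theorem re_pow_ne_of_re_eq_prime {q : ℕ} (hq : q.Prime) (hodd : Odd q) (hre : z.re = q)
    (hN : ¬ (q : ℤ) ∣ z.norm) {m : ℕ} (hm : m ≠ 0) (hNm : (-z.norm) ^ m ≡ 1 [ZMOD q]) :
    (z ^ (2 * m + 1)).re ≠ q := by
  intro hpow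
  have hqZ : Prime (q : ℤ) := Nat.prime_iff_prime_int.mp hq
  have hdim : ¬ (q : ℤ) ∣ d * z.im := fun h => hN <| by
    rw [Zsqrtd.norm_def, hre]
    exact dvd_sub (dvd_mul_right _ _) (h.mul_right _)
  have him : ¬ (q : ℤ) ∣ 2 * z.im := fun h => by
    rcases hqZ.dvd_or_dvd h with h2 | h
    · have : q = 2 := (Nat.prime_dvd_prime_iff_eq hq Nat.prime_two).mp
        (Int.natCast_dvd_natCast.mp h2)
      exact absurd (this ▸ hodd) (by decide)
    · exact hdim (h.mul_left d)
  have hsqre : ¬ (q : ℤ) ∣ (z ^ 2).re := fun h => hN <| by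
    rw [re_sq_zsqrtd, hre] at h
    exact (dvd_sub_right (dvd_mul_right _ _)).mp h
  have hsqim : (z ^ 2).im = q * (2 * z.im) := by rw [im_sq_zsqrtd, hre]
  have hsqim0 : (z ^ 2).im ≠ 0 :=
    hsqim ▸ mul_ne_zero hqZ.ne_zero fun h => him (h ▸ dvd_zero _)
  have hdescent (k : ℕ) : q ^ k ∣ m := by
    induction k with
    | zero => simp
    | succ k ih =>
      have him1 := pow_add_two_dvd_im_sq_pow hq hre hdim hNm hpow ih
      obtain ⟨s, hs⟩ := im_dvd_im_pow (z ^ 2) m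
      have hdvd : (q ^ (k + 1) : ℤ) ∣ s := by
        rw [hs, hsqim, pow_succ', mul_assoc, mul_dvd_mul_iff_left hqZ.ne_zero] at him1
        exact hqZ.pow_dvd_of_dvd_mul_left _ him him1
      refine pow_dvd_of_pow_mul_im_dvd_im_pow hq hodd (hsqim ▸ dvd_mul_right _ _) hsqim0 hsqre ?_
      rw [hs, mul_comm]
      exact mul_dvd_mul_left _ hdvd
  exact hm (Nat.eq_zero_of_dvd_of_lt (hdescent m) (Nat.lt_pow_self hq.one_lt))

theorem re_ne_neg_of_re_pow_eq_prime {p q : ℕ} (hp : p.Prime) (hpodd : Odd p) (hq : q.Prime)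
    (h : (z ^ p).re = q) : z.re ≠ -q := by
  intro hre
  have hpq : p = q := by
    have h1 : (p : ℤ) ∣ q - (-q) ^ p := by
      have := prime_mul_re_dvd_re_pow_sub z hp hpodd
      rw [h, hre] at this
      exact (dvd_mul_right _ _).trans this
    have h2 : (p : ℤ) ∣ (q : ℤ) ^ p - q := Int.ModEq.dvd (Int.ModEq.pow_prime_eq_self hp q).symm
    have h3 : (p : ℤ) ∣ ((2 * q : ℕ) : ℤ) := by
      rw [hpodd.neg_pow] at h1
      have hsub : ((2 * q : ℕ) : ℤ) = (q - -(q : ℤ) ^ p) - (q ^ p - q) := by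
        push_cast
        ring
      exact hsub ▸ dvd_sub h1 h2
    exact (Nat.prime_dvd_prime_iff_eq hp hq).mp
      (hpodd.coprime_two_right.dvd_of_dvd_mul_left (Int.natCast_dvd_natCast.mp h3))
  obtain ⟨m, rfl⟩ := hpodd
  obtain ⟨c, hc⟩ := sq_re_dvd_re_pow_sub z m
  have hpq' : (2 * m + 1 : ℤ) = q := by exact_mod_cast hpq
  have hdvd : (q : ℤ) ∣ 1 := by
    rw [h, hre, hpq'] at hc
    refine ⟨c - (z.im ^ 2 * d) ^ m, mul_left_cancel₀ (Int.natCast_ne_zero.mpr hq.ne_zero) ?_⟩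
    linear_combination hc
  exact hq.one_lt.ne' (by exact_mod_cast Int.eq_one_of_dvd_one (by positivity) hdvd)

theorem mod_four_eq_one_of_re_pow_eq_re {p : ℕ} (hp : Odd p) (hN : z.norm ≡ 3 [ZMOD 4])
    (hre : Odd z.re) (h : (z ^ p).re = z.re) : p % 4 = 1 := by
  by_contra hp1
  obtain ⟨k, rfl⟩ : ∃ k, p = 4 * k + 3 := ⟨p / 4, by have := Nat.odd_iff.mp hp; omega⟩
  have h4 := re_pow_modEq_neg_re_of_norm_modEq_three hN k
  rw [h, Int.modEq_iff_dvd] at h4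
  have := Int.odd_iff.mp hre
  omega

theorem re_pow_ne_three_of_re_eq_three {p : ℕ} (hp : Odd p) (hp1 : p ≠ 1)
    (hN : z.norm ≡ 3 [ZMOD 4]) (hN3 : ¬ 3 ∣ z.norm) (hre : z.re = 3) : (z ^ p).re ≠ 3 := by
  intro h
  have hp4 := mod_four_eq_one_of_re_pow_eq_re hp hN (hre ▸ by decide) (h.trans hre.symm)
  obtain ⟨k, rfl⟩ : ∃ k, p = 2 * (2 * k) + 1 := ⟨p / 4, by omega⟩
  have hsq : (-z.norm) ^ 2 ≡ 1 [ZMOD 3] := by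
    rw [neg_sq]
    exact Int.ModEq.pow_card_sub_one_eq_one Nat.prime_three
      (Int.prime_three.coprime_iff_not_dvd.mpr hN3).symm
  refine re_pow_ne_of_re_eq_prime Nat.prime_three (by decide) hre hN3 (m := 2 * k) (by omega) ?_ h
  simpa [pow_mul] using hsq.pow k

theorem mod_forty_eq_of_re_eq_five {p : ℕ} (hp : Odd p) (hp1 : p ≠ 1)
    (hN : z.norm ≡ 3 [ZMOD 4]) (hN5 : ¬ 5 ∣ z.norm) (hre : z.re = 5) (h : (z ^ p).re = 5) :
    p % 40 = 29 := by
  have hp4 := mod_four_eq_one_of_re_pow_eq_re hp hN (hre ▸ by decide) (h.trans hre.symm)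
  obtain ⟨k, rfl⟩ : ∃ k, p = 2 * (2 * k) + 1 := ⟨p / 4, by omega⟩
  have hNk : ¬ ((-z.norm) ^ 2) ^ k ≡ 1 [ZMOD 5] := fun hmod =>
    re_pow_ne_of_re_eq_prime Nat.prime_five (by decide) hre hN5 (by omega)
      (by rw [pow_mul]; exact hmod) h
  have hsq : (-z.norm) ^ 2 ≡ -1 [ZMOD 5] := by
    have hcases : (-z.norm) ^ 2 ≡ 1 [ZMOD 5] ∨ (-z.norm) ^ 2 ≡ -1 [ZMOD 5] := by
      have h5 : z.norm % 5 = 1 ∨ z.norm % 5 = 2 ∨ z.norm % 5 = 3 ∨ z.norm % 5 = 4 := by omega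
      rcases h5 with h5 | h5 | h5 | h5 <;> simp [Int.ModEq, sq, Int.mul_emod, h5]
    exact hcases.resolve_left fun h1 => hNk (by simpa using h1.pow k)
  have hk : Odd k := by
    by_contra hk
    exact hNk (by simpa [Nat.not_odd_iff_even.mp hk] using hsq.pow k)
  have hmod : (z.im ^ 2 * d) ^ (2 * k) ≡ -1 [ZMOD 5] := by
    have hd : z.im ^ 2 * d ≡ -z.norm [ZMOD 5] := by
      refine Int.modEq_iff_dvd.mpr ⟨-5, ?_⟩
      rw [Zsqrtd.norm_def, hre]
      ring
    have h1 := (hd.pow 2).trans hsq |>.pow k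
    rwa [← pow_mul, hk.neg_one_pow] at h1
  have h5 : 5 ∣ (4 * k + 2 : ℤ) := by
    obtain ⟨c, hc⟩ := sq_re_dvd_re_pow_sub z (2 * k)
    obtain ⟨e, he⟩ := hmod.dvd
    rw [h, hre] at hc
    push_cast at hc
    refine ⟨c - (4 * k + 1) * e, mul_left_cancel₀ (by norm_num : (5 : ℤ) ≠ 0) ?_⟩
    linear_combination hc - 5 * (4 * k + 1) * he
  have := Nat.odd_iff.mp hk
  omega

theorem norm_eq_three_of_re_pow_eq_of_re_eq_one {p x : ℕ} (hp : p.Prime) (hodd : Odd p)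
    (hx : x = 3 ∨ x = 5) (h : (z ^ p).re = x) (hre : z.re = 1 ∨ z.re = -1) :
    z.norm = 3 ∧ p = 3 := by
  have hdvd : (p : ℤ) ∣ x - z.re := by
    have := prime_mul_re_dvd_re_pow_sub z hp hodd
    rw [h] at this
    rcases hre with hre | hre <;> simpa [hre, hodd.neg_one_pow] using this
  have hle : p ≤ 6 := by
    have := Int.le_of_dvd (by omega) hdvd
    omega
  have hp3 : p = 3 := by
    have := hp.two_le
    interval_cases p <;> first | rfl | omega | exact absurd hodd (by decide)
  subst hp3
  rw [re_pow_add_two z 1, re_pow_add_two z 0] at h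
  simp only [pow_zero, zero_add, pow_one, Zsqrtd.re_one] at h
  rcases hre with hre | hre <;> rw [hre] at h hdvd <;> omega

theorem norm_eq_three_or_mod_forty_of_re_pow_eq {p x : ℕ} (hp : p.Prime) (hodd : Odd p)
    (hx : x = 3 ∨ x = 5) (hN : z.norm ≡ 3 [ZMOD 4]) (hcop : ¬ (x : ℤ) ∣ z.norm)
    (h : (z ^ p).re = x) :
    z.norm = 3 ∧ p = 3 ∨ x = 5 ∧ z.re = 5 ∧ p % 40 = 29 := by
  have hxp : x.Prime := by rcases hx with rfl | rfl <;> norm_num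
  have hdvd : z.re ∣ x := h ▸ by
    have := (dvd_mul_left _ _).trans (prime_mul_re_dvd_re_pow_sub z hp hodd)
    exact (dvd_sub_left (dvd_pow_self _ hp.ne_zero)).mp this
  have hcases : (z.re = 1 ∨ z.re = -1) ∨ z.re = x ∨ z.re = -x := by
    have := (Nat.dvd_prime hxp).mp (Int.natCast_dvd_natCast.mp (Int.natAbs_dvd.mpr hdvd))
    omega
  rcases hcases with hre | hre | hre
  · exact .inl (norm_eq_three_of_re_pow_eq_of_re_eq_one hp hodd hx h hre)
  · rcases hx with rfl | rfl
    · exact absurd h (re_pow_ne_three_of_re_eq_three hodd hp.ne_one hN hcop hre)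
    · exact .inr ⟨rfl, hre, mod_forty_eq_of_re_eq_five hodd hp.ne_one hN hcop hre h⟩
  · exact absurd hre (re_ne_neg_of_re_pow_eq_prime hp hodd hxp h)

end ZsqrtdPow

/-! ### A modular sieve for `re z = 5` and `n ≡ 29 (mod 40)` -/

/-- The step `(Rₙ, Rₙ₊₁) ↦ (Rₙ₊₁, Rₙ₊₂)` modulo `q` of the recurrence `Rₙ₊₂ = 10 Rₙ₊₁ - r Rₙ`
satisfied by `Rₙ = re (z ^ n)` when `re z = 5` and `z` has norm `r`; for `r ≤ q` the coefficient
`q - r` stands for `-r`. -/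
def lucasStep (q r : ℕ) (s : ℕ × ℕ) : ℕ × ℕ :=
  (s.2, (10 * s.2 + (q - r) * s.1) % q)

/-- The pair `(Rₙ, Rₙ₊₁)` modulo `q` of the recurrence in `lucasStep`, with `R₀ = 1`, `R₁ = 5`. -/
def lucasPair (q r n : ℕ) : ℕ × ℕ :=
  (lucasStep q r)^[n] (1 % q, 5 % q)

theorem lucasPair_eq_re_pow {d : ℤ} {z : ℤ√d} (hre : z.re = 5) {q r : ℕ} (hr : r ≤ q)
    (hN : z.norm ≡ r [ZMOD q]) (n : ℕ) :
    ((lucasPair q r n).1 : ZMod q) = (z ^ n).re ∧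
      ((lucasPair q r n).2 : ZMod q) = (z ^ (n + 1)).re := by
  have hN' : (z.norm : ZMod q) = r := by
    simpa using (ZMod.intCast_eq_intCast_iff _ _ q).mpr hN
  induction n with
  | zero => simp [lucasPair, hre]
  | succ n ih =>
    have hsucc : lucasPair q r (n + 1) = lucasStep q r (lucasPair q r n) :=
      Function.iterate_succ_apply' _ _ _
    rw [hsucc, re_pow_add_two z, hre]
    refine ⟨ih.2, ?_⟩
    simp only [lucasStep, ZMod.natCast_mod, Nat.cast_add, Nat.cast_mul, Nat.cast_sub hr,
      ZMod.natCast_self, ih.1, ih.2]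
    push_cast
    rw [hN']
    ring

theorem re_pow_ne_five_of_lucasPair_ne {d : ℤ} {z : ℤ√d} (hre : z.re = 5) {q r n : ℕ}
    (hr : r ≤ q) (hN : z.norm ≡ r [ZMOD q]) (hne : (lucasPair q r n).1 % q ≠ 5 % q) :
    (z ^ n).re ≠ 5 := by
  intro h
  refine hne ((ZMod.natCast_eq_natCast_iff' _ _ q).mp ?_)
  rw [(lucasPair_eq_re_pow hre hr hN n).1, h]
  simp

/-- A prime power modulus together with a set of residues, encoded by the binary digits of
`residues`, of those norms `L` for which the recurrence of `lucasStep`, periodic with period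
`period`, avoids the value `5` at all indices that are `29` modulo `step`. -/
structure SieveRow where
  modulus : ℕ
  period : ℕ
  step : ℕ
  residues : ℕ

namespace SieveRow

/-- The defining property of a `SieveRow`, a finite check over one period. -/
def Valid (s : SieveRow) : Prop :=
  0 < s.modulus ∧ 0 < s.period ∧ s.step ∣ s.period ∧ s.step ∣ 40 ∧
    ∀ r < s.modulus, s.residues.testBit r = true →
      lucasPair s.modulus r s.period = lucasPair s.modulus r 0 ∧
      ∀ n < s.period, n % s.step = 29 % s.step →
        (lucasPair s.modulus r n).1 % s.modulus ≠ 5 % s.modulus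

instance (s : SieveRow) : Decidable s.Valid :=
  inferInstanceAs (Decidable (_ ∧ _ ∧ _ ∧ _ ∧ _))

theorem Valid.re_pow_ne_five {s : SieveRow} (hs : s.Valid) {d : ℤ} {z : ℤ√d} (hre : z.re = 5)
    {L : ℕ} (hN : z.norm = L) (hL : s.residues.testBit (L % s.modulus) = true) {n : ℕ}
    (hn : n % 40 = 29) : (z ^ n).re ≠ 5 := by
  obtain ⟨hq, hP, hstep, hforty, hall⟩ := hs
  have hr : L % s.modulus < s.modulus := Nat.mod_lt _ hq
  obtain ⟨hper, havoid⟩ := hall _ hr hL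
  have hmod : lucasPair s.modulus (L % s.modulus) n =
      lucasPair s.modulus (L % s.modulus) (n % s.period) := by
    have hperiod : Function.IsPeriodicPt (lucasStep s.modulus (L % s.modulus)) s.period
      (1 % s.modulus, 5 % s.modulus) := hper
    exact (hperiod.iterate_mod_apply n).symm
  refine re_pow_ne_five_of_lucasPair_ne hre hr.le ?_ (hmod ▸ havoid _ (Nat.mod_lt _ hP) ?_)
  · rw [hN, Int.natCast_mod]
    exact (Int.mod_modEq _ _).symm
  · rw [Nat.mod_mod_of_dvd _ hstep, ← Nat.mod_mod_of_dvd n hforty, hn]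

end SieveRow

/-- Enough rows to sieve out every `L < 400000` with `L ≡ 3 (mod 4)`. -/
def sieveRows : List SieveRow :=
  [⟨11, 120, 40, 2044⟩,
   ⟨17, 288, 8, 114672⟩,
   ⟨101, 100, 20, 130615544076329052127069019006⟩,
   ⟨61, 60, 20, 581021408280256104⟩,
   ⟨41, 40, 40, 62003413172⟩,
   ⟨71, 70, 10, 832204909870296311520⟩,
   ⟨113, 112, 8, 7063528614931559248429677220880008⟩,
   ⟨3, 8, 8, 4⟩,
   ⟨31, 30, 10, 297241280⟩,
   ⟨97, 96, 8, 43406251046430597019004002824⟩,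
   ⟨131, 130, 10, 1030503984899062618474859489748963390000⟩,
   ⟨7, 48, 8, 66⟩,
   ⟨32, 16, 8, 2 ^ 7 + 2 ^ 11 + 2 ^ 15 + 2 ^ 23 + 2 ^ 27 + 2 ^ 31⟩]

theorem sieveRows_valid : ∀ s ∈ sieveRows, s.Valid := by
  decide +kernel

theorem exists_sieveRow_testBit {L : ℕ} (hL : L < 400000) (hL4 : L % 4 = 3) :
    ∃ s ∈ sieveRows, s.residues.testBit (L % s.modulus) = true := by
  by_cases hL16 : L % 16 = 3
  · have hcover : ∀ i < 160, ∀ j < 160, ∃ s ∈ sieveRows,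
        s.residues.testBit ((16 * (160 * i + j) + 3) % s.modulus) = true := by
      decide +kernel
    have h := hcover (L / 16 / 160) (by omega) (L / 16 % 160) (Nat.mod_lt _ (by norm_num))
    rwa [Nat.div_add_mod, ← hL16, Nat.div_add_mod] at h
  · have hresidue : ∀ r < 32, r % 4 = 3 → r % 16 ≠ 3 →
        (2 ^ 7 + 2 ^ 11 + 2 ^ 15 + 2 ^ 23 + 2 ^ 27 + 2 ^ 31).testBit r = true := by
      decide
    exact ⟨⟨32, 16, 8, _⟩, by simp [sieveRows], hresidue (L % 32) (by omega) (by omega) (by omega)⟩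

theorem re_pow_ne_five_of_norm_lt {d : ℤ} {z : ℤ√d} (hre : z.re = 5) {L : ℕ} (hN : z.norm = L)
    (hL : L < 400000) (hL4 : L % 4 = 3) {n : ℕ} (hn : n % 40 = 29) : (z ^ n).re ≠ 5 := by
  obtain ⟨s, hs, hbit⟩ := exists_sieveRow_testBit hL hL4
  exact (sieveRows_valid s hs).re_pow_ne_five hre hN hbit hn

theorem re_pow_ne_five_of_lt {d : ℤ} {z : ℤ√d} (hre : z.re = 5) {n : ℕ} (hn : n % 40 = 29)
    (hlt : n < 149) : (z ^ n).re ≠ 5 := by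
  have hmodulus (q : ℕ) (hq : 0 < q) (h : ∀ r < q, (lucasPair q r n).1 % q ≠ 5 % q) :
      (z ^ n).re ≠ 5 := by
    have hqZ : (0 : ℤ) < q := mod_cast hq
    have hnonneg := Int.emod_nonneg z.norm hqZ.ne'
    have hemod := Int.emod_lt_of_pos z.norm hqZ
    refine re_pow_ne_five_of_lucasPair_ne (r := (z.norm % q).toNat) hre (by omega) ?_
      (h _ (by omega))
    rw [Int.toNat_of_nonneg hnonneg]
    exact (Int.mod_modEq _ _).symm
  obtain rfl | rfl | rfl : n = 29 ∨ n = 69 ∨ n = 109 := by omega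
  · exact hmodulus 7 (by decide) (by decide +kernel)
  · exact hmodulus 19 (by decide) (by decide +kernel)
  · exact hmodulus 43 (by decide) (by decide +kernel)

/-! ### Padé approximants to a square root -/

/-- The integers `4 ^ r * binom (n - 1/2) r`, the coefficients of `(1 + 4 X) ^ (n - 1/2)`. -/
def halfBinom : ℕ → ℕ → ℤ
  | 0, r => (-1) ^ r * r.centralBinom
  | _ + 1, 0 => 1
  | n + 1, r + 1 => halfBinom n (r + 1) + 4 * halfBinom n r

theorem halfBinom_zero_right (n : ℕ) : halfBinom n 0 = 1 := by
  cases n <;> simp [halfBinom]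

theorem succ_mul_halfBinom_succ (n r : ℕ) :
    (r + 1) * halfBinom n (r + 1) = 2 * (2 * n - 1 - 2 * r) * halfBinom n r := by
  induction n generalizing r with
  | zero =>
    have h : ((r : ℤ) + 1) * (r + 1).centralBinom = 2 * (2 * r + 1) * r.centralBinom :=
      mod_cast Nat.succ_mul_centralBinom_succ r
    simp only [halfBinom, pow_succ, Nat.cast_zero]
    linear_combination -(-1) ^ r * h
  | succ n ih =>
    cases r with
    | zero =>
      have h := ih 0
      simp only [halfBinom_zero_right] at h
      simp only [halfBinom, halfBinom_zero_right]
      push_cast at h ⊢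
      linear_combination h
    | succ r =>
      simp only [halfBinom]
      have h := ih (r + 1)
      push_cast at h ⊢
      linear_combination h + 4 * ih r

theorem halfBinom_self (n : ℕ) : halfBinom n n = n.centralBinom := by
  induction n with
  | zero => rfl
  | succ n ih =>
    have hrec := succ_mul_halfBinom_succ n n
    have hcentral : ((n : ℤ) + 1) * (n + 1).centralBinom = 2 * (2 * n + 1) * n.centralBinom :=
      mod_cast Nat.succ_mul_centralBinom_succ n
    refine mul_left_cancel₀ (by positivity : (n + 1 : ℤ) ≠ 0) ?_
    simp only [halfBinom]
    linear_combination hrec - hcentral + (4 * n + 2) * ih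

theorem halfBinom_succ_self (n : ℕ) : halfBinom (n + 1) n = (2 * n + 1) * n.centralBinom := by
  have hrec := succ_mul_halfBinom_succ (n + 1) n
  have hcentral : ((n : ℤ) + 1) * (n + 1).centralBinom = 2 * (2 * n + 1) * n.centralBinom :=
    mod_cast Nat.succ_mul_centralBinom_succ n
  rw [halfBinom_self] at hrec
  push_cast at hrec
  linarith

theorem exists_odd_factorial_mul_halfBinom (n r : ℕ) :
    ∃ o : ℤ, Odd o ∧ r.factorial * halfBinom n r = 2 ^ r * o := by
  induction r with
  | zero => exact ⟨1, odd_one, by simp [halfBinom_zero_right]⟩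
  | succ r ih =>
    obtain ⟨o, ho, hr⟩ := ih
    refine ⟨(2 * (n - r : ℤ) - 1) * o, .mul ⟨n - r - 1, by ring⟩ ho, ?_⟩
    rw [Nat.factorial_succ]
    push_cast
    linear_combination (r.factorial : ℤ) * succ_mul_halfBinom_succ n r
      + 2 * (2 * n - 1 - 2 * r : ℤ) * hr

/-- The coefficient of `X ^ k` in `(1 + 4 B X) ^ (u - 1/2) * (1 + 4 L X) ^ (v - 1/2)`. -/
def halfConv (u v k : ℕ) (B L : ℤ) : ℤ :=
  ∑ j ∈ Finset.range (k + 1), halfBinom u j * halfBinom v (k - j) * B ^ j * L ^ (k - j)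

theorem exists_odd_factorial_mul_halfConv (u v k : ℕ) {B L : ℤ} (hB : Even B) (hL : Odd L) :
    ∃ o : ℤ, Odd o ∧ k.factorial * halfConv u v k B L = 2 ^ k * o := by
  have hterm (j : ℕ) (hj : j ≤ k) : ∃ o : ℤ, (Odd o ↔ j = 0) ∧
      k.factorial * (halfBinom u j * halfBinom v (k - j) * B ^ j * L ^ (k - j)) = 2 ^ k * o := by
    obtain ⟨s, hs, hu⟩ := exists_odd_factorial_mul_halfBinom u j
    obtain ⟨t, ht, hv⟩ := exists_odd_factorial_mul_halfBinom v (k - j)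
    refine ⟨k.choose j * (s * t) * B ^ j * L ^ (k - j), ?_, ?_⟩
    · rcases Nat.eq_zero_or_pos j with rfl | hj0
      · simp [hs, ht, hL.pow]
      · simp [Int.odd_mul, Int.odd_pow, Int.not_odd_iff_even.mpr hB, hj0.ne']
    · have hfact : (k.choose j * j.factorial * (k - j).factorial : ℤ) = k.factorial :=
        mod_cast Nat.choose_mul_factorial_mul_factorial hj
      have hpow : (2 : ℤ) ^ k = 2 ^ j * 2 ^ (k - j) := by rw [← pow_add, Nat.add_sub_cancel' hj]
      rw [← hfact, hpow]
      linear_combination (k.choose j * B ^ j * L ^ (k - j) : ℤ) *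
        (((k - j).factorial * halfBinom v (k - j)) * hu + 2 ^ j * s * hv)
  choose! o hodd ho using hterm
  refine ⟨∑ j ∈ Finset.range (k + 1), o j, ?_, ?_⟩
  · rw [Finset.sum_range_succ', add_comm]
    refine ((hodd 0 k.zero_le).mpr rfl).add_even (Finset.even_sum _ fun j hj => ?_)
    rw [← Int.not_odd_iff_even, hodd _ (Finset.mem_range.mp hj)]
    exact j.succ_ne_zero
  · rw [halfConv, Finset.mul_sum, Finset.mul_sum]
    exact Finset.sum_congr rfl fun j hj => ho j (Nat.lt_succ_iff.mp (Finset.mem_range.mp hj))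

theorem halfConv_sub_ne_zero {n m : ℕ} (hnm : n < m) (u v u' v' : ℕ) {B L : ℤ} (hB : Even B)
    (hL : Odd L) (W : ℤ) :
    halfConv u v m B L - 4 ^ (m - n) * halfConv u' v' n B L * W ≠ 0 := by
  intro h
  obtain ⟨o, ho, hm⟩ := exists_odd_factorial_mul_halfConv u v m hB hL
  obtain ⟨o', -, hn⟩ := exists_odd_factorial_mul_halfConv u' v' n hB hL
  obtain ⟨f, hf⟩ := Nat.factorial_dvd_factorial hnm.le
  have hpow : (4 : ℤ) ^ (m - n) * 2 ^ n = 2 ^ m * 2 ^ (m - n) := by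
    rw [show (4 : ℤ) = 2 * 2 by norm_num, mul_pow, mul_assoc, ← pow_add,
      Nat.sub_add_cancel hnm.le, mul_comm]
  have hf' : (m.factorial : ℤ) = n.factorial * f := mod_cast hf
  have hodd : o = 2 ^ (m - n) * (f * o' * W) := by
    refine mul_left_cancel₀ (by positivity : (2 : ℤ) ^ m ≠ 0) ?_
    linear_combination m.factorial * h - hm + (4 : ℤ) ^ (m - n) * W * f * hn
      + f * o' * W * hpow + 4 ^ (m - n) * halfConv u' v' n B L * W * hf'
  have heven : Even o := hodd ▸
    (Even.pow_of_ne_zero even_two (Nat.sub_ne_zero_of_lt hnm)).mul_right _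
  exact Int.not_odd_iff_even.mpr heven ho

theorem ne_zero_of_odd {c : ℤ} (hc : Odd c) : c ≠ 0 := by
  rintro rfl
  exact Int.not_odd_zero hc

/-- The beta integral `∫₀¹ (1 - s²) ^ n * s ^ (c - 1) ds`, continued to all odd integers `c` by
expanding the integrand. -/
noncomputable def oddBeta (n : ℕ) (c : ℤ) : ℝ :=
  ∑ i ∈ Finset.range (n + 1), (n.choose i : ℝ) * ((-1) ^ i / (2 * i + c))

theorem oddBeta_zero (c : ℤ) : oddBeta 0 c = 1 / c := by
  simp [oddBeta]

theorem oddBeta_succ (n : ℕ) (c : ℤ) : oddBeta (n + 1) c = oddBeta n c - oddBeta n (c + 2) := by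
  rw [oddBeta, Finset.sum_choose_succ_mul (fun i _ => (-1 : ℝ) ^ i / (2 * i + c)), oddBeta,
    oddBeta, sub_eq_add_neg, ← Finset.sum_neg_distrib]
  congr 1
  refine Finset.sum_congr rfl fun i _ => ?_
  push_cast
  rw [pow_succ, show 2 * ((i : ℝ) + 1) + c = 2 * i + (c + 2) by ring]
  ring

theorem mul_oddBeta (n : ℕ) {c : ℤ} (hc : Odd c) :
    c * oddBeta n c = (2 * n + 2 + c) * oddBeta n (c + 2) := by
  induction n generalizing c with
  | zero =>
    have hc0 : (c : ℝ) ≠ 0 := mod_cast ne_zero_of_odd hc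
    have hc2 : (c : ℝ) + 2 ≠ 0 :=
      mod_cast ne_zero_of_odd (hc.add_even even_two)
    rw [oddBeta_zero, oddBeta_zero]
    push_cast
    field_simp
    ring
  | succ n ih =>
    have h2 := ih (hc.add_even even_two)
    rw [oddBeta_succ, oddBeta_succ]
    push_cast at h2 ⊢
    linear_combination ih hc - h2

theorem oddBeta_one (n : ℕ) : (2 * n + 1) * n.centralBinom * oddBeta n 1 = 4 ^ n := by
  induction n with
  | zero => simp [oddBeta]
  | succ n ih =>
    have hbeta := mul_oddBeta n odd_one
    have hcentral : ((n : ℝ) + 1) * (n + 1).centralBinom = 2 * (2 * n + 1) * n.centralBinom :=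
      mod_cast Nat.succ_mul_centralBinom_succ n
    rw [oddBeta_succ]
    push_cast at hbeta ⊢
    linear_combination 4 * ih + (n + 1).centralBinom * hbeta
      + 2 * oddBeta n 1 * hcentral

theorem oddBeta_neg_one (n : ℕ) : n.centralBinom * oddBeta n (-1) = -4 ^ n := by
  have hbeta := mul_oddBeta n (c := -1) (by decide)
  norm_num at hbeta
  linear_combination -oddBeta_one n - n.centralBinom * hbeta

theorem abs_oddBeta_le (n : ℕ) {c : ℤ} (hc : Odd c) : |oddBeta n c| ≤ 2 ^ n := by
  induction n generalizing c with
  | zero =>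
    have hc0 : c ≠ 0 := ne_zero_of_odd hc
    have h1 : (1 : ℝ) ≤ |(c : ℝ)| := mod_cast Int.one_le_abs hc0
    rw [oddBeta_zero, abs_div, abs_one, pow_zero]
    exact div_le_one_of_le₀ h1 (abs_nonneg _)
  | succ n ih =>
    calc |oddBeta (n + 1) c| ≤ |oddBeta n c| + |oddBeta n (c + 2)| := by
          rw [oddBeta_succ]
          exact abs_sub _ _
      _ ≤ 2 ^ n + 2 ^ n := add_le_add (ih hc) (ih (hc.add_even even_two))
      _ = 2 ^ (n + 1) := by ring

/-- The Padé polynomials to the square root, up to scaling: those with `(k, N, c) = (m, n, 1)` and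
`(n, m, -1)` have quotient close to `√x` at `x` close to `1`. -/
noncomputable def padeSum (k N : ℕ) (c : ℤ) (x : ℝ) : ℝ :=
  ∑ j ∈ Finset.range (k + 1), (-1) ^ j * k.choose j * oddBeta N (c - 2 * j) * x ^ j

theorem abs_padeSum_le (k N : ℕ) {c : ℤ} (hc : Odd c) {x : ℝ} (hx0 : 0 ≤ x) (hx1 : x ≤ 1) :
    |padeSum k N c x| ≤ 2 ^ (k + N) := by
  calc |padeSum k N c x|
      ≤ ∑ j ∈ Finset.range (k + 1), |(-1) ^ j * k.choose j * oddBeta N (c - 2 * j) * x ^ j| :=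
        Finset.abs_sum_le_sum_abs _ _
    _ ≤ ∑ j ∈ Finset.range (k + 1), (k.choose j : ℝ) * 2 ^ N := by
        refine Finset.sum_le_sum fun j _ => ?_
        have hbeta := abs_oddBeta_le N (hc.sub_even (even_two_mul (j : ℤ)))
        have hpow := pow_le_one₀ (n := j) hx0 hx1
        rw [abs_mul, abs_mul, abs_mul, abs_neg_one_pow, one_mul, Nat.abs_cast, abs_pow,
          abs_of_nonneg hx0]
        calc _ ≤ (k.choose j : ℝ) * 2 ^ N * 1 := by gcongr
          _ = _ := mul_one _
    _ = 2 ^ (k + N) := by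
        rw [← Finset.sum_mul, ← Nat.cast_sum, Nat.sum_range_choose, pow_add]
        push_cast
        rfl

theorem halfBinom_mul_choose_mul_oddBeta {u v k N : ℕ} {c : ℤ} (hc : c = 2 * k + 1 - 2 * v)
    (hN : 2 * N + c = 2 * u - 1) {j : ℕ} (hj : j ≤ k) :
    halfBinom v k * k.choose j * oddBeta N (c - 2 * j) =
      (-1) ^ j * oddBeta N c * halfBinom u j * halfBinom v (k - j) := by
  induction j with
  | zero =>
    simp [halfBinom_zero_right]
    ring
  | succ j ih =>
    have hodd : Odd (c - 2 * (j + 1)) := ⟨k - v - j - 1, by rw [hc]; ring⟩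
    have hc0 : (c - 2 * (j + 1) : ℝ) ≠ 0 := mod_cast ne_zero_of_odd hodd
    have hbeta := mul_oddBeta N hodd
    rw [show c - 2 * ((j : ℤ) + 1) + 2 = c - 2 * j by ring] at hbeta
    have hchoose : (k.choose (j + 1) : ℝ) * (j + 1) = k.choose j * (k - j) := by
      rw [← Nat.cast_sub (by omega)]
      exact_mod_cast Nat.choose_succ_right_eq k j
    have hu : ((j : ℝ) + 1) * halfBinom u (j + 1) = 2 * (2 * u - 1 - 2 * j) * halfBinom u j :=
      mod_cast succ_mul_halfBinom_succ u j
    have hv : ((k : ℝ) - j) * halfBinom v (k - j) =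
        -2 * (c - 2 * (j + 1)) * halfBinom v (k - (j + 1)) := by
      have h : (_ : ℝ) = _ := congrArg Int.cast (succ_mul_halfBinom_succ v (k - (j + 1)))
      rw [show k - (j + 1) + 1 = k - j by omega] at h
      push_cast [Nat.cast_sub hj, hc] at h ⊢
      linear_combination h
    have hNr : 2 * (N : ℝ) + c = 2 * u - 1 := by exact_mod_cast hN
    refine mul_left_cancel₀ (mul_ne_zero j.cast_add_one_ne_zero hc0) ?_
    push_cast at hbeta ⊢
    linear_combination halfBinom v k * (c - 2 * (j + 1)) * oddBeta N (c - 2 * (j + 1)) * hchoose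
      + halfBinom v k * k.choose j * (k - j) * (hbeta + oddBeta N (c - 2 * j) * hNr)
      + (2 * u - 1 - 2 * j) * (k - j) * ih (by omega)
      + (-1) ^ j * oddBeta N c * ((c - 2 * (j + 1)) * halfBinom v (k - (j + 1)) * hu
        + (2 * u - 1 - 2 * j) * halfBinom u j * hv)

theorem halfBinom_mul_padeSum {u v k N : ℕ} {c : ℤ} (hc : c = 2 * k + 1 - 2 * v)
    (hN : 2 * N + c = 2 * u - 1) {B L : ℤ} (hL : L ≠ 0) :
    halfBinom v k * (L : ℝ) ^ k * padeSum k N c (B / L) = oddBeta N c * halfConv u v k B L := by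
  have : (L : ℝ) ≠ 0 := mod_cast hL
  rw [padeSum, halfConv, Int.cast_sum, Finset.mul_sum, Finset.mul_sum]
  refine Finset.sum_congr rfl fun j hj => ?_
  have hj' : j ≤ k := Nat.lt_succ_iff.mp (Finset.mem_range.mp hj)
  have hsign : ((-1 : ℝ) ^ j) * (-1) ^ j = 1 := by rw [← mul_pow]; norm_num
  have hpow : (L : ℝ) ^ k * (B / L) ^ j = B ^ j * L ^ (k - j) := by
    rw [div_pow, ← pow_sub_mul_pow _ hj']
    field_simp
  push_cast
  linear_combination (-1 : ℝ) ^ j * L ^ k * (B / L) ^ j * halfBinom_mul_choose_mul_oddBeta hc hN hj'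
    + oddBeta N c * halfBinom u j * halfBinom v (k - j) * (L ^ k * (B / L) ^ j * hsign + hpow)

theorem one_sub_pow_eq_sum (n : ℕ) (y : ℝ) :
    (1 - y) ^ n = ∑ i ∈ Finset.range (n + 1), (-1) ^ i * n.choose i * y ^ i := by
  rw [sub_eq_neg_add, add_pow]
  refine Finset.sum_congr rfl fun i _ => ?_
  rw [neg_pow, one_pow]
  ring

/-- The primitive of `(1 - s²) ^ n * (1 - x / s²) ^ m` obtained by expanding both powers. Its values
at `1` and `√x` are the two Padé polynomials at `x`. -/
noncomputable def padePrimitive (m n : ℕ) (x s : ℝ) : ℝ :=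
  ∑ i ∈ Finset.range (n + 1), ∑ j ∈ Finset.range (m + 1),
    ((-1) ^ i * n.choose i) * ((-1) ^ j * m.choose j) * x ^ j *
      (s ^ (2 * i - 2 * j + 1 : ℤ) / (2 * i - 2 * j + 1 : ℤ))

theorem hasDerivAt_padePrimitive (m n : ℕ) (x : ℝ) {s : ℝ} (hs : s ≠ 0) :
    HasDerivAt (padePrimitive m n x) ((1 - s ^ 2) ^ n * (1 - x / s ^ 2) ^ m) s := by
  rw [one_sub_pow_eq_sum, one_sub_pow_eq_sum, Finset.sum_mul_sum]
  refine HasDerivAt.fun_sum fun i _ => HasDerivAt.fun_sum fun j _ => ?_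
  have hexp : ((2 * i - 2 * j + 1 : ℤ) : ℝ) ≠ 0 :=
    Int.cast_ne_zero.mpr (ne_zero_of_odd ⟨(i : ℤ) - j, by ring⟩)
  have hderiv := ((hasDerivAt_zpow (2 * i - 2 * j + 1) s (.inl hs)).div_const
    ((2 * i - 2 * j + 1 : ℤ) : ℝ)).const_mul
      (((-1) ^ i * n.choose i) * ((-1) ^ j * m.choose j) * x ^ j)
  have hzpow : s ^ (2 * i - 2 * j : ℤ) = (s ^ 2) ^ i / (s ^ 2) ^ j := by
    rw [zpow_sub₀ hs, ← pow_mul, ← pow_mul]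
    norm_cast
  refine hderiv.congr_deriv ?_
  rw [add_sub_cancel_right, mul_div_cancel_left₀ _ hexp, hzpow, div_pow]
  ring

theorem padePrimitive_one (m n : ℕ) (x : ℝ) : padePrimitive m n x 1 = padeSum m n 1 x := by
  rw [padePrimitive, padeSum, Finset.sum_comm]
  refine Finset.sum_congr rfl fun j _ => ?_
  rw [oddBeta, Finset.mul_sum, Finset.sum_mul]
  refine Finset.sum_congr rfl fun i _ => ?_
  rw [one_zpow]
  push_cast
  rw [show 2 * (i : ℝ) + (1 - 2 * j) = 2 * i - 2 * j + 1 by ring]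
  ring

theorem padePrimitive_self (m n : ℕ) {w : ℝ} (hw : w ≠ 0) :
    padePrimitive m n (w ^ 2) w = -(w * padeSum n m (-1) (w ^ 2)) := by
  rw [padePrimitive, padeSum, ← mul_neg, ← Finset.sum_neg_distrib, Finset.mul_sum]
  refine Finset.sum_congr rfl fun i _ => ?_
  rw [oddBeta, Finset.mul_sum, Finset.sum_mul, ← Finset.sum_neg_distrib, Finset.mul_sum]
  refine Finset.sum_congr rfl fun j _ => ?_
  have hzpow : (w ^ 2) ^ j * w ^ (2 * i - 2 * j + 1 : ℤ) = w * (w ^ 2) ^ i := by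
    rw [zpow_add₀ hw, zpow_sub₀ hw, ← pow_mul, ← pow_mul, zpow_one]
    norm_cast
    field_simp
  push_cast
  rw [show 2 * (j : ℝ) + (-1 - 2 * i) = -(2 * i - 2 * j + 1) by ring, div_neg]
  linear_combination (-1) ^ i * n.choose i * ((-1) ^ j * m.choose j) /
    (2 * (i : ℝ) - 2 * j + 1) * hzpow

theorem exists_padeSum_add_mul_padeSum_eq (m n : ℕ) {w : ℝ} (hw0 : 0 < w) (hw1 : w < 1) :
    ∃ s ∈ Set.Ioo w 1, padeSum m n 1 (w ^ 2) + w * padeSum n m (-1) (w ^ 2) =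
      (1 - w) * ((1 - s ^ 2) ^ n * (1 - w ^ 2 / s ^ 2) ^ m) := by
  have hderiv (s : ℝ) (hs : w ≤ s) := hasDerivAt_padePrimitive m n (w ^ 2) (hw0.trans_le hs).ne'
  obtain ⟨s, hs, hslope⟩ := exists_hasDerivAt_eq_slope _ _ hw1
    (fun s hs => (hderiv s hs.1).continuousAt.continuousWithinAt)
    (fun s hs => hderiv s hs.1.le)
  refine ⟨s, hs, ?_⟩
  rw [hslope, mul_div_cancel₀ _ (sub_ne_zero.mpr hw1.ne'), padePrimitive_one,
    padePrimitive_self m n hw0.ne', sub_neg_eq_add]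

theorem sq_mul_pow_five_le {u v : ℝ} (hu : 0 ≤ u) (hv : 0 ≤ v) :
    u ^ 2 * v ^ 5 ≤ 2 ^ 2 * 5 ^ 5 / 7 ^ 7 * (u + v) ^ 7 := by
  have hfactor : 2 ^ 2 * 5 ^ 5 * (u + v) ^ 7 - 7 ^ 7 * (u ^ 2 * v ^ 5) =
      (5 * u - 2 * v) ^ 2 * (3125 * v ^ 5 + 37500 * u * v ^ 4 + 27708 * u ^ 2 * v ^ 3 +
        13540 * u ^ 3 * v ^ 2 + 3900 * u ^ 4 * v + 500 * u ^ 5) := by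
    ring
  have hnonneg : 0 ≤ (5 * u - 2 * v) ^ 2 * (3125 * v ^ 5 + 37500 * u * v ^ 4 +
      27708 * u ^ 2 * v ^ 3 + 13540 * u ^ 3 * v ^ 2 + 3900 * u ^ 4 * v + 500 * u ^ 5) := by
    positivity
  linarith [hfactor, hnonneg]

theorem abs_padeSum_add_sqrt_mul_padeSum_le (q r : ℕ) {x : ℝ} (hx0 : 0 < x) (hx1 : x < 1) :
    |padeSum (5 * q + r) (2 * q) 1 x + √x * padeSum (2 * q) (5 * q + r) (-1) x| ≤
      (1 - x) * ((2 ^ 2 * 5 ^ 5 / 7 ^ 7 * (1 - x) ^ 7 / x ^ 5) ^ q * ((1 - x) / x) ^ r) := by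
  have hsq : √x ^ 2 = x := Real.sq_sqrt hx0.le
  have hsqrt1 : √x < 1 := Real.sqrt_one ▸ Real.sqrt_lt_sqrt hx0.le hx1
  have hsqrtx : x ≤ √x := by nlinarith [Real.sqrt_nonneg x]
  obtain ⟨s, ⟨hs0, hs1⟩, hpade⟩ :=
    exists_padeSum_add_mul_padeSum_eq (5 * q + r) (2 * q) (Real.sqrt_pos.mpr hx0) hsqrt1
  rw [hsq] at hpade
  have hxs : x < s ^ 2 := (Real.sqrt_lt' ((Real.sqrt_nonneg x).trans_lt hs0)).mp hs0
  have hss : s ^ 2 < 1 := by nlinarith [Real.sqrt_nonneg x]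
  have hu : 0 ≤ 1 - s ^ 2 := by linarith
  have hv : 0 ≤ s ^ 2 - x := by linarith
  have hquot0 : 0 ≤ 1 - x / s ^ 2 := sub_nonneg.mpr (div_le_one_of_le₀ hxs.le (sq_nonneg s))
  have hquot : 1 - x / s ^ 2 ≤ (s ^ 2 - x) / x := by
    rw [one_sub_div (hx0.trans hxs).ne']
    exact div_le_div_of_nonneg_left hv hx0 hxs.le
  have hamgm := sq_mul_pow_five_le hu hv
  rw [show 1 - s ^ 2 + (s ^ 2 - x) = 1 - x by ring] at hamgm
  have : 0 ≤ 1 - √x := sub_nonneg.mpr hsqrt1.le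
  rw [hpade, abs_of_nonneg (by positivity)]
  calc (1 - √x) * ((1 - s ^ 2) ^ (2 * q) * (1 - x / s ^ 2) ^ (5 * q + r))
      ≤ (1 - x) * ((1 - s ^ 2) ^ (2 * q) * ((s ^ 2 - x) / x) ^ (5 * q + r)) := by gcongr
    _ = (1 - x) * (((1 - s ^ 2) ^ 2 * (s ^ 2 - x) ^ 5 / x ^ 5) ^ q * ((s ^ 2 - x) / x) ^ r) := by
      rw [pow_add, pow_mul, pow_mul, mul_div_assoc ((1 - s ^ 2) ^ 2), ← div_pow,
        mul_pow ((1 - s ^ 2) ^ 2)]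
      ring
    _ ≤ _ := by gcongr

theorem mul_padeSum_add_eq_mul_halfConv_sub {n m : ℕ} (hnm : n ≤ m) {B L : ℤ} (hL : L ≠ 0)
    (W : ℤ) :
    (2 * n + 1) * n.centralBinom * m.centralBinom *
        ((L : ℝ) ^ m * padeSum m n 1 (B / L) + W * (L ^ n * padeSum n m (-1) (B / L))) =
      4 ^ n * (halfConv (n + 1) m m B L - 4 ^ (m - n) * halfConv m (n + 1) n B L * W : ℤ) := by
  have hm : m.centralBinom * (L : ℝ) ^ m * padeSum m n 1 (B / L) =
      oddBeta n 1 * halfConv (n + 1) m m B L := by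
    have h := halfBinom_mul_padeSum (u := n + 1) (v := m) (k := m) (N := n) (c := 1) (B := B)
      (by ring) (by push_cast; ring) hL
    rwa [halfBinom_self, Int.cast_natCast] at h
  have hn : (2 * n + 1) * n.centralBinom * (L : ℝ) ^ n * padeSum n m (-1) (B / L) =
      oddBeta m (-1) * halfConv m (n + 1) n B L := by
    have h := halfBinom_mul_padeSum (u := m) (v := n + 1) (k := n) (N := m) (c := -1) (B := B)
      (by push_cast; ring) (by ring) hL
    rw [halfBinom_succ_self] at h
    exact_mod_cast h
  have hpow : (4 : ℝ) ^ m = 4 ^ n * 4 ^ (m - n) := by rw [← pow_add, Nat.add_sub_cancel' hnm]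
  push_cast
  linear_combination (2 * n + 1 : ℝ) * n.centralBinom * hm + m.centralBinom * W * hn
    + halfConv (n + 1) m m B L * oddBeta_one n + W * halfConv m (n + 1) n B L *
      (oddBeta_neg_one m - hpow)

theorem one_le_mul_abs_padeSum_add {n m : ℕ} (hnm : n < m) {B L : ℤ} (hB : Even B) (hL : Odd L)
    (W : ℤ) : 1 ≤ (2 * n + 1) * 4 ^ m * |(L : ℝ) ^ m * padeSum m n 1 (B / L)
      + W * (L ^ n * padeSum n m (-1) (B / L))| := by
  have hint := congrArg abs
    (mul_padeSum_add_eq_mul_halfConv_sub (B := B) hnm.le (ne_zero_of_odd hL) W)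
  rw [abs_mul, abs_of_nonneg (by positivity), abs_mul,
    abs_of_nonneg (by positivity : (0 : ℝ) ≤ 4 ^ n)] at hint
  set S := (L : ℝ) ^ m * padeSum m n 1 (B / L) + W * (L ^ n * padeSum n m (-1) (B / L))
  have hone : (1 : ℝ) ≤
      |((halfConv (n + 1) m m B L - 4 ^ (m - n) * halfConv m (n + 1) n B L * W : ℤ) : ℝ)| :=
    mod_cast Int.one_le_abs (halfConv_sub_ne_zero hnm _ _ _ _ hB hL W)
  refine le_of_mul_le_mul_left ?_ (by positivity : (0 : ℝ) < 4 ^ n)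
  calc (4 : ℝ) ^ n * 1 ≤ 4 ^ n *
        |((halfConv (n + 1) m m B L - 4 ^ (m - n) * halfConv m (n + 1) n B L * W : ℤ) : ℝ)| := by
        gcongr
    _ = (2 * n + 1) * n.centralBinom * m.centralBinom * |S| := hint.symm
    _ ≤ (2 * n + 1) * 4 ^ n * 4 ^ m * |S| := by
        gcongr <;> exact mod_cast Nat.centralBinom_le_four_pow _
    _ = 4 ^ n * ((2 * n + 1) * 4 ^ m * |S|) := by ring

theorem abs_sqrt_sub_le {c l Y : ℝ} (hc : 0 < c) (hcl : c < l) (hY : 0 ≤ Y) {k p : ℕ}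
    (hp : p + 1 = 2 * k) (h : c + (l - c) * Y ^ 2 = l ^ p) :
    |√((l - c) / l) - (l - c) * Y / l ^ k| ≤ c / l ^ p := by
  have hl : 0 < l := hc.trans hcl
  have hx0 : 0 < (l - c) / l := div_pos (sub_pos.mpr hcl) hl
  set x := (l - c) / l with hx
  set w := √x
  set v := (l - c) * Y / l ^ k with hv
  have hw : w ^ 2 = x := Real.sq_sqrt hx0.le
  have hw0 : 0 < w := Real.sqrt_pos.mpr hx0
  have hxw : x ≤ w := by
    have hx1 : x ≤ 1 := div_le_one_of_le₀ (by linarith) hl.le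
    exact Real.le_sqrt_of_sq_le (by nlinarith)
  have hv0 : 0 ≤ v := by
    have : 0 < l - c := sub_pos.mpr hcl
    positivity
  have : 0 < c / l ^ p := by positivity
  have hprod : (w - v) * (w + v) = x * (c / l ^ p) := by
    have hv2 : v ^ 2 = (l - c) * (l ^ p - c) / l ^ (p + 1) := by
      rw [hv, div_pow, ← pow_mul, mul_comm k, ← hp]
      congr 1
      linear_combination (l - c) * h
    have hx2 : x - v ^ 2 = x * (c / l ^ p) := by
      rw [hv2, hx]
      field_simp
      ring
    linear_combination hw + hx2
  have hwv : 0 ≤ w - v := by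
    refine nonneg_of_mul_nonneg_left (b := w + v) ?_ (by linarith)
    rw [hprod]
    positivity
  rw [abs_of_nonneg hwv]
  refine le_of_mul_le_mul_right ?_ hw0
  calc (w - v) * w ≤ (w - v) * (w + v) := by gcongr; linarith
    _ = x * (c / l ^ p) := hprod
    _ ≤ w * (c / l ^ p) := by gcongr
    _ = c / l ^ p * w := mul_comm _ _

theorem abs_mul_padeSum_add_mul_padeSum_le {c l Y : ℝ} (hc : 0 < c) (hcl : c < l) (hY : 0 ≤ Y)
    {p q r : ℕ} (hp : p + 1 = 2 * (3 * q + r)) (h : c + (l - c) * Y ^ 2 = l ^ p) {x : ℝ}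
    (hx : x = (l - c) / l) :
    |l ^ (5 * q + r) * padeSum (5 * q + r) (2 * q) 1 x +
        (l - c) * Y * (l ^ (2 * q) * padeSum (2 * q) (5 * q + r) (-1) x)| ≤
      l ^ (5 * q + r) * ((1 - x) * ((2 ^ 2 * 5 ^ 5 / 7 ^ 7 * (1 - x) ^ 7 / x ^ 5) ^ q *
        ((1 - x) / x) ^ r) + c / l ^ p * 2 ^ (2 * q + (5 * q + r))) := by
  have hl : 0 < l := hc.trans hcl
  have hx0 : 0 < x := hx ▸ div_pos (sub_pos.mpr hcl) hl
  have hx1 : x < 1 := by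
    rw [hx, div_lt_one hl]
    linarith
  have happrox := hx ▸ abs_sqrt_sub_le hc hcl hY hp h
  set P := padeSum (5 * q + r) (2 * q) 1 x
  set Q := padeSum (2 * q) (5 * q + r) (-1) x
  have hQ : |Q| ≤ 2 ^ (2 * q + (5 * q + r)) := abs_padeSum_le _ _ (by decide) hx0.le hx1.le
  have hsplit : l ^ (5 * q + r) * P + (l - c) * Y * (l ^ (2 * q) * Q) = l ^ (5 * q + r) *
      ((P + √x * Q) - (√x - (l - c) * Y / l ^ (3 * q + r)) * Q) := by
    rw [show 5 * q + r = 2 * q + (3 * q + r) by ring, pow_add l]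
    field_simp
    ring
  rw [hsplit, abs_mul, abs_of_pos (by positivity)]
  gcongr
  refine (abs_sub _ _).trans (add_le_add ?_ ?_)
  · exact abs_padeSum_add_sqrt_mul_padeSum_le q r hx0 hx1
  · rw [abs_mul]
    gcongr

theorem mul_three_fifths_pow_le {q : ℕ} (hq : 25 ≤ q) : (4 * q + 1) * (3 / 5 : ℝ) ^ q ≤ 1 / 2 := by
  induction q, hq using Nat.le_induction with
  | base => norm_num
  | succ q hq ih =>
    have hq' : (25 : ℝ) ≤ q := mod_cast hq
    have hpos : (0 : ℝ) < (3 / 5) ^ q := by positivity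
    push_cast [pow_succ]
    nlinarith

theorem mul_one_third_pow_le {q : ℕ} (hq : 24 ≤ q) :
    (4 * q + 5) * (25 * 2 ^ 17 * (1 / 3 : ℝ) ^ q) < 1 / 2 := by
  induction q, hq using Nat.le_induction with
  | base => norm_num
  | succ q hq ih =>
    have hq' : (24 : ℝ) ≤ q := mod_cast hq
    have hpos : (0 : ℝ) < (1 / 3) ^ q := by positivity
    push_cast [pow_succ]
    nlinarith [hq', hpos]

theorem mul_padeBound_le {q r : ℕ} (hq : 25 ≤ q) (hr : r ≤ 2) {x : ℝ}
    (hx : 15999 / 16000 ≤ x) (hx1 : x < 1) :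
    (4 * q + 1) * (100 / (1 - x)) ^ (5 * q + r) *
      ((1 - x) * ((2 ^ 2 * 5 ^ 5 / 7 ^ 7 * (1 - x) ^ 7 / x ^ 5) ^ q * ((1 - x) / x) ^ r)) ≤
    1 / 2 := by
  have hε : 0 < 1 - x := sub_pos.mpr hx1
  have hx0 : 0 < x := by linarith
  have hblock : 100 ^ 5 * (2 ^ 2 * 5 ^ 5 / 7 ^ 7) * (1 - x) ^ 2 / x ^ 5 ≤ 3 / 5 := by
    calc 100 ^ 5 * (2 ^ 2 * 5 ^ 5 / 7 ^ 7) * (1 - x) ^ 2 / x ^ 5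
        ≤ 100 ^ 5 * (2 ^ 2 * 5 ^ 5 / 7 ^ 7) * (1 / 16000) ^ 2 / (15999 / 16000) ^ 5 := by
          gcongr
          linarith
      _ ≤ 3 / 5 := by norm_num
  have hrest : (100 / x) ^ r * (1 - x) ≤ 1 := by
    calc (100 / x) ^ r * (1 - x) ≤ 101 ^ 2 * (1 / 16000) := by
          gcongr
          · calc (100 / x) ^ r ≤ 101 ^ r := by
                  gcongr
                  rw [div_le_iff₀ hx0]
                  linarith
              _ ≤ 101 ^ 2 := pow_le_pow_right₀ (by norm_num) hr
          · linarith
      _ ≤ 1 := by norm_num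
  calc _ = (4 * q + 1) * (100 ^ 5 * (2 ^ 2 * 5 ^ 5 / 7 ^ 7) * (1 - x) ^ 2 / x ^ 5) ^ q *
        ((100 / x) ^ r * (1 - x)) := by
        have hq : (100 / (1 - x)) ^ 5 * (2 ^ 2 * 5 ^ 5 / 7 ^ 7 * (1 - x) ^ 7 / x ^ 5) =
            100 ^ 5 * (2 ^ 2 * 5 ^ 5 / 7 ^ 7) * (1 - x) ^ 2 / x ^ 5 := by field_simp
        have hr : 100 / (1 - x) * ((1 - x) / x) = 100 / x := by field_simp
        rw [← hq, ← hr, pow_add, pow_mul, mul_pow, mul_pow]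
        ring
    _ ≤ (4 * q + 1) * (3 / 5) ^ q * 1 := by gcongr
    _ ≤ 1 / 2 := by
        rw [mul_one]
        exact mul_three_fifths_pow_le hq

theorem mul_approxBound_lt {p q r : ℕ} (hq : 25 ≤ q) (hp : p + 1 = 2 * (3 * q + r)) {l : ℝ}
    (hl : 400000 ≤ l) :
    (4 * q + 1) * (4 * l) ^ (5 * q + r) * (25 / l ^ p * 2 ^ (2 * q + (5 * q + r))) < 1 / 2 := by
  obtain ⟨t, rfl⟩ : ∃ t, q = t + 1 := ⟨q - 1, by omega⟩
  have hl0 : 0 < l := by linarith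
  have hlp : l ^ p = l ^ (5 * (t + 1) + r) * l ^ t * l ^ r := by
    rw [← pow_add, ← pow_add]
    congr 1
    omega
  have htwo : (4 : ℝ) ^ (5 * (t + 1) + r) * 2 ^ (2 * (t + 1) + (5 * (t + 1) + r)) =
      2 ^ 17 * (2 ^ 17) ^ t * 8 ^ r := by
    rw [show (4 : ℝ) = 2 ^ 2 by norm_num, show (8 : ℝ) = 2 ^ 3 by norm_num]
    simp only [← pow_mul, ← pow_add]
    congr 1
    ring
  calc _ = (4 * t + 5) * (25 * 2 ^ 17 * (2 ^ 17 / l) ^ t) * (8 / l) ^ r := by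
        rw [hlp, div_pow, div_pow, mul_pow]
        push_cast
        field_simp
        linear_combination (4 * t + 5) * htwo
    _ ≤ (4 * t + 5) * (25 * 2 ^ 17 * (1 / 3) ^ t) * 1 := by
        have hthird : 2 ^ 17 / l ≤ 1 / 3 := by
          rw [div_le_iff₀ hl0]
          linarith
        have height : (8 / l) ^ r ≤ 1 :=
          pow_le_one₀ (by positivity) (div_le_one_of_le₀ (by linarith) hl0.le)
        gcongr
    _ < 1 / 2 := by
        rw [mul_one]
        exact mul_one_third_pow_le (by omega)

theorem add_mul_sq_ne_pow {p : ℕ} (hp : 149 ≤ p) (hodd : Odd p) {L : ℤ} (hL : 400000 ≤ L)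
    (hLodd : Odd L) (Y : ℤ) : 25 + (L - 25) * Y ^ 2 ≠ L ^ p := by
  intro h
  wlog hY : 0 ≤ Y generalizing Y
  · exact this (-Y) (by rwa [neg_sq]) (by omega)
  obtain ⟨k, hk⟩ := hodd.add_one
  obtain ⟨q, r, hr, hqr⟩ : ∃ q r, r ≤ 2 ∧ k = 3 * q + r :=
    ⟨k / 3, k % 3, by omega, (Nat.div_add_mod k 3).symm⟩
  have hpk : p + 1 = 2 * (3 * q + r) := by omega
  have hq : 25 ≤ q := by omega
  have hl : (400000 : ℝ) ≤ L := mod_cast hL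
  have hone := one_le_mul_abs_padeSum_add (show 2 * q < 5 * q + r by omega)
    (hLodd.sub_odd (by decide : Odd (25 : ℤ))) hLodd ((L - 25) * Y)
  have hupper := abs_mul_padeSum_add_mul_padeSum_le (by norm_num) (by linarith) (mod_cast hY) hpk
    (show 25 + ((L : ℝ) - 25) * Y ^ 2 = L ^ p from mod_cast h) rfl
  push_cast at hone
  set l := (L : ℝ)
  set x := (l - 25) / l with hx
  have hl0 : 0 < l := by linarith
  have hε : 1 - x = 25 / l := by
    rw [hx]
    field_simp
    ring
  have hε0 : 0 < 1 - x := hε ▸ by positivity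
  have hε1 : 1 - x ≤ 1 / 16000 := by
    rw [hε, div_le_div_iff₀ hl0 (by norm_num)]
    linarith
  have hpade := mul_padeBound_le hq hr (by linarith) (sub_pos.mp hε0)
  rw [show 100 / (1 - x) = 4 * l by rw [hε]; field_simp; norm_num] at hpade
  have happrox := mul_approxBound_lt hq hpk hl
  have hscaled := mul_le_mul_of_nonneg_left hupper
    (by positivity : 0 ≤ (4 * q + 1 : ℝ) * 4 ^ (5 * q + r))
  rw [mul_pow] at hpade happrox
  linarith

theorem re_pow_ne_five {d : ℤ} (hd : d ≤ 0) {z : ℤ√d} (hre : z.re = 5) (hN : z.norm ≡ 3 [ZMOD 4])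
    {p : ℕ} (hp : p % 40 = 29) : (z ^ p).re ≠ 5 := by
  obtain ⟨L, hL⟩ := Int.eq_ofNat_of_zero_le (Zsqrtd.norm_nonneg hd z)
  have hL4 : L % 4 = 3 := by
    rw [hL] at hN
    exact_mod_cast hN
  rcases lt_or_ge L 400000 with hsmall | hlarge
  · exact re_pow_ne_five_of_norm_lt hre hL hsmall hL4 hp
  rcases lt_or_ge p 149 with hlt | hge
  · exact re_pow_ne_five_of_lt hre hp hlt
  intro h
  obtain ⟨Y, hY⟩ := im_dvd_im_pow z p
  have hnorm := map_pow (Zsqrtd.normMonoidHom (d := d)) z p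
  change (z ^ p).norm = z.norm ^ p at hnorm
  refine add_mul_sq_ne_pow hge (Nat.odd_iff.mpr (by omega)) (L := L) (mod_cast hlarge)
    (mod_cast Nat.odd_iff.mpr (by omega)) Y ?_
  rw [hL, Zsqrtd.norm_def, h, hY] at hnorm
  rw [Zsqrtd.norm_def, hre] at hL
  linear_combination hnorm - Y ^ 2 * hL

theorem norm_eq_three_of_re_pow_eq {d : ℤ} (hd : d ≤ 0) {z : ℤ√d} {p x : ℕ} (hp : p.Prime)
    (hodd : Odd p) (hx : x = 3 ∨ x = 5) (hN : z.norm ≡ 3 [ZMOD 4]) (hcop : ¬(x : ℤ) ∣ z.norm)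
    (h : (z ^ p).re = x) : z.norm = 3 ∧ p = 3 := by
  rcases norm_eq_three_or_mod_forty_of_re_pow_eq hp hodd hx hN hcop h with
    hexc | ⟨rfl, hre, hmod⟩
  · exact hexc
  · exact absurd h (re_pow_ne_five hd hre hN hmod)

/-! ### Integers and units of `ℚ(√D)` for `D ≤ 0`, `D ≡ 2 (mod 4)` -/

section ImaginaryQuadratic

open NumberField

theorem even_of_eq_mul_sq {M D : ℤ} {r : ℚ} (hD : D % 4 = 2) (h : (M : ℚ) = D * r ^ 2) :
    Even M := by
  rcases eq_or_ne r 0 with rfl | hr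
  · obtain rfl : M = 0 := by simpa using h
    exact Even.zero
  obtain ⟨e, rfl⟩ : ∃ e, D = 2 * (2 * e + 1) := ⟨D / 4, by omega⟩
  have he : ¬(2 : ℤ) ∣ 2 * e + 1 := by omega
  have he0 : ((2 * e + 1 : ℤ) : ℚ) ≠ 0 := by exact_mod_cast (by omega : 2 * e + 1 ≠ 0)
  have hval_two : padicValRat 2 2 = 1 := mod_cast padicValRat.self (p := 2) one_lt_two
  -- The `2`-adic valuation of `D r ^ 2` is odd, hence nonzero.
  have hval : (padicValInt 2 M : ℤ) = 1 + 2 * padicValRat 2 r := by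
    rw [← padicValRat.of_int, h, Int.cast_mul, padicValRat.mul (mul_ne_zero (by norm_num) he0)
      (pow_ne_zero 2 hr), padicValRat.mul (by norm_num) he0, padicValRat.pow,
      Int.cast_ofNat, hval_two, padicValRat.of_int,
      padicValInt.eq_zero_of_not_dvd he]
    push_cast
    ring
  rw [even_iff_two_dvd]
  by_contra hM
  rw [padicValInt.eq_zero_of_not_dvd hM] at hval
  omega

theorem exists_intCast_eq_of_isIntegral_ratCast {r : ℚ} (h : IsIntegral ℤ (r : ℂ)) :
    ∃ m : ℤ, (m : ℚ) = r :=
  IsIntegrallyClosed.isIntegral_iff.mp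
    ((isIntegral_algebraMap_iff (algebraMap ℚ ℂ).injective).mp h)

theorem cpow_one_half_sq (z : ℂ) : (z ^ ((1 : ℂ) / 2)) ^ 2 = z := by
  rw [one_div]
  exact Complex.cpow_ofNat_inv_pow z 2

theorem re_eq_zero_and_im_sq_of_sq_eq {t : ℂ} {d : ℝ} (hd : d ≤ 0) (ht : t ^ 2 = d) :
    t.re = 0 ∧ t.im ^ 2 = -d := by
  have hre : t.re ^ 2 - t.im ^ 2 = d := by
    simpa [sq] using congrArg Complex.re ht
  have him : t.re * t.im = 0 := by
    have := congrArg Complex.im ht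
    simp only [sq, Complex.mul_im, Complex.ofReal_im] at this
    linarith
  have h0 : t.re = 0 := by
    rcases mul_eq_zero.mp him with h | h
    · exact h
    · rw [h] at hre
      nlinarith [sq_nonneg t.re]
  rw [h0] at hre
  exact ⟨h0, by linarith⟩

theorem normSq_ofReal_add_of_sq_eq (a : ℝ) {t : ℂ} {d : ℝ} (hd : d ≤ 0) (ht : t ^ 2 = d) :
    Complex.normSq (a + t) = a ^ 2 - d := by
  obtain ⟨hre, him⟩ := re_eq_zero_and_im_sq_of_sq_eq hd ht
  rw [Complex.normSq_apply, Complex.add_re, Complex.add_im, Complex.ofReal_re, Complex.ofReal_im,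
    hre]
  linear_combination him

theorem re_eq_zero_of_sq_eq_intCast {t : ℂ} {d : ℤ} (hd : d ≤ 0) (ht : t ^ 2 = d) : t.re = 0 :=
  (re_eq_zero_and_im_sq_of_sq_eq (d := d) (by exact_mod_cast hd) (by simpa using ht)).1

theorem normSq_intCast_add_of_sq_eq (a : ℤ) {t : ℂ} {d : ℤ} (hd : d ≤ 0) (ht : t ^ 2 = d) :
    Complex.normSq (a + t) = (a ^ 2 - d : ℤ) := by
  have := normSq_ofReal_add_of_sq_eq a (t := t) (d := d) (by exact_mod_cast hd) (by simpa using ht)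
  simpa using this

variable {D : ℤ}

theorem isIntegral_cpow_one_half {R : Type*} [CommRing R] [Algebra R ℂ] :
    IsIntegral R ((D : ℂ) ^ ((1 : ℂ) / 2)) := by
  refine IsIntegral.of_pow two_pos ?_
  rw [cpow_one_half_sq, ← map_intCast (algebraMap R ℂ)]
  exact isIntegral_algebraMap

instance numberField_Qsqrt (D : ℤ) : NumberField (Qsqrt D) where
  to_charZero := inferInstance
  to_finiteDimensional :=
    IntermediateField.adjoin.finiteDimensional isIntegral_cpow_one_half

theorem exists_rat_eq_add_mul_of_mem_Qsqrt {z : ℂ} (hz : z ∈ Qsqrt D) :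
    ∃ u v : ℚ, z = u + v * (D : ℂ) ^ ((1 : ℂ) / 2) := by
  have hs := cpow_one_half_sq D
  rw [Qsqrt, ← IntermediateField.mem_toSubalgebra,
    IntermediateField.adjoin_simple_toSubalgebra_of_isAlgebraic
      isIntegral_cpow_one_half.isAlgebraic] at hz
  set s := (D : ℂ) ^ ((1 : ℂ) / 2)
  induction hz using Algebra.adjoin_induction with
  | mem x hx => exact ⟨0, 1, by rw [Set.mem_singleton_iff.mp hx]; simp⟩
  | algebraMap r => exact ⟨r, 0, by simp⟩
  | add x y _ _ hx hy =>
    obtain ⟨u, v, rfl⟩ := hx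
    obtain ⟨u', v', rfl⟩ := hy
    exact ⟨u + u', v + v', by push_cast; ring⟩
  | mul x y _ _ hx hy =>
    obtain ⟨u, v, rfl⟩ := hx
    obtain ⟨u', v', rfl⟩ := hy
    exact ⟨u * u' + D * v * v', u * v' + u' * v, by push_cast; rw [← hs]; ring⟩

theorem exists_int_trace_norm_of_isIntegral {u d : ℚ} {t : ℂ} (hd : d ≤ 0) (ht : t ^ 2 = d)
    (h : IsIntegral ℤ (u + t)) : ∃ T N : ℤ, (T : ℚ) = 2 * u ∧ (N : ℚ) = u ^ 2 - d := by
  have hdr : (d : ℝ) ≤ 0 := by exact_mod_cast hd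
  have htr : t ^ 2 = ((d : ℝ) : ℂ) := by simpa using ht
  have hconj : IsIntegral ℤ ((starRingEnd ℂ) (u + t)) := h.map (starRingEnd ℂ).toIntAlgHom
  have htrace : u + t + (starRingEnd ℂ) (u + t) = ((2 * u : ℚ) : ℂ) := by
    rw [Complex.add_conj, Complex.add_re, (re_eq_zero_and_im_sq_of_sq_eq hdr htr).1]
    simp
  have hnorm : (u + t) * (starRingEnd ℂ) (u + t) = ((u ^ 2 - d : ℚ) : ℂ) := by
    have := normSq_ofReal_add_of_sq_eq u hdr htr
    rw [Complex.ofReal_ratCast] at this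
    rw [Complex.mul_conj, this]
    push_cast
    rfl
  obtain ⟨T, hT⟩ := exists_intCast_eq_of_isIntegral_ratCast (htrace ▸ h.add hconj)
  obtain ⟨N, hN⟩ := exists_intCast_eq_of_isIntegral_ratCast (hnorm ▸ h.mul hconj)
  exact ⟨T, N, hT, hN⟩

theorem exists_int_eq_add_of_isIntegral (hD : D ≤ 0) (hD4 : D % 4 = 2) {z : ℂ}
    (hz : z ∈ Qsqrt D) (hi : IsIntegral ℤ z) :
    ∃ (a d : ℤ) (t : ℂ), z = a + t ∧ t ^ 2 = d ∧ d ≤ 0 ∧ Even d := by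
  obtain ⟨u, v, rfl⟩ := exists_rat_eq_add_mul_of_mem_Qsqrt hz
  have hDq : (D : ℚ) ≤ 0 := by exact_mod_cast hD
  have hd : D * v ^ 2 ≤ 0 := mul_nonpos_of_nonpos_of_nonneg hDq (sq_nonneg v)
  have ht : (v * (D : ℂ) ^ ((1 : ℂ) / 2)) ^ 2 = (D * v ^ 2 : ℚ) := by
    rw [mul_pow, cpow_one_half_sq]
    push_cast
    ring
  obtain ⟨T, N, hT, hN⟩ := exists_int_trace_norm_of_isIntegral hd ht hi
  have hTeven : Even T := by
    have hdisc : Even (T ^ 2 - 4 * N) :=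
      even_of_eq_mul_sq (r := 2 * v) hD4 (by push_cast; rw [hT, hN]; ring)
    have : Even (T ^ 2) := by
      simpa using hdisc.add (show Even (4 * N) from ⟨2 * N, by ring⟩)
    exact (Int.even_pow.mp this).1
  obtain ⟨a, rfl⟩ := hTeven.two_dvd
  have hu : u = a := by
    push_cast at hT
    linarith
  have hda : ((a ^ 2 - N : ℤ) : ℚ) = D * v ^ 2 := by
    push_cast
    rw [hN, hu]
    ring
  refine ⟨a, a ^ 2 - N, _, by rw [hu, Rat.cast_intCast], ?_, ?_, even_of_eq_mul_sq hD4 hda⟩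
  · rw [ht, ← hda, Rat.cast_intCast]
  · rw [← hda] at hd
    exact_mod_cast hd

theorem exists_int_algebraMap_eq_add (hD : D ≤ 0) (hD4 : D % 4 = 2) (z : 𝓞 (Qsqrt D)) :
    ∃ (a d : ℤ) (t : ℂ), algebraMap (𝓞 (Qsqrt D)) ℂ z = a + t ∧ t ^ 2 = d ∧ d ≤ 0 ∧ Even d :=
  exists_int_eq_add_of_isIntegral hD hD4 (z : Qsqrt D).2
    (RingOfIntegers.isIntegral z).algebraMap

theorem units_eq_one_or_neg_one (hD : D ≤ 0) (hD4 : D % 4 = 2) (u : (𝓞 (Qsqrt D))ˣ) :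
    (u : 𝓞 (Qsqrt D)) = 1 ∨ (u : 𝓞 (Qsqrt D)) = -1 := by
  obtain ⟨a, d, t, hu, ht, hd, hde⟩ := exists_int_algebraMap_eq_add hD hD4 (u : 𝓞 (Qsqrt D))
  obtain ⟨a', d', t', hu', ht', hd', -⟩ :=
    exists_int_algebraMap_eq_add hD hD4 (↑u⁻¹ : 𝓞 (Qsqrt D))
  have hnorm : (a ^ 2 - d) * (a' ^ 2 - d') = 1 := by
    have h := congrArg Complex.normSq (congrArg (algebraMap (𝓞 (Qsqrt D)) ℂ) u.mul_inv)
    rw [map_mul, map_mul, hu, hu', normSq_intCast_add_of_sq_eq a hd ht,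
      normSq_intCast_add_of_sq_eq a' hd' ht', map_one, map_one] at h
    exact_mod_cast h
  have h1 : a ^ 2 - d = 1 := by
    rcases Int.eq_one_or_neg_one_of_mul_eq_one hnorm with h | h
    · exact h
    · nlinarith [sq_nonneg a]
  have hd0 : d = 0 := by
    obtain ⟨e, rfl⟩ := hde.two_dvd
    have := sq_nonneg a
    omega
  have ht0 : t = 0 := by simpa [hd0] using ht
  have hinj := FaithfulSMul.algebraMap_injective (𝓞 (Qsqrt D)) ℂ
  have ha : a = 1 ∨ a = -1 := mul_self_eq_one_iff.mp (by linarith)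
  rw [ht0, add_zero] at hu
  exact ha.imp (fun h => hinj (by simp [hu, h])) (fun h => hinj (by simp [hu, h]))

theorem exists_ringOfIntegers_algebraMap_eq_cpow_one_half (D : ℤ) :
    ∃ σ : 𝓞 (Qsqrt D), algebraMap (𝓞 (Qsqrt D)) ℂ σ = (D : ℂ) ^ ((1 : ℂ) / 2) :=
  ⟨⟨⟨_, IntermediateField.mem_adjoin_simple_self ℚ _⟩,
    (isIntegral_algebraMap_iff (algebraMap (Qsqrt D) ℂ).injective).mp
      isIntegral_cpow_one_half⟩, rfl⟩

end ImaginaryQuadratic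

/-! ### From the class group to a perfect power -/

theorem dvd_natCard_or_exists_prime_pow_div_eq_one {G : Type*} [Group G] {g : G} {n : ℕ}
    (hn : 0 < n) (h : g ^ n = 1) :
    n ∣ Nat.card G ∨ ∃ p : ℕ, p.Prime ∧ p ∣ n ∧ g ^ (n / p) = 1 := by
  by_contra! hcon
  exact hcon.1 (orderOf_eq_of_pow_and_pow_div_prime hn h hcon.2 ▸ orderOf_dvd_natCard g)

theorem dvd_card_classGroup_or_exists_associated_pow {O : Type*} [CommRing O]
    [IsDedekindDomain O] {α α' c : O} {n : ℕ} (hn : 0 < n) (h0 : α ≠ 0) (hcop : IsCoprime α α')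
    (h : α * α' = c ^ n) :
    n ∣ Nat.card (ClassGroup O) ∨
      ∃ p : ℕ, p.Prime ∧ p ∣ n ∧ ∃ β : O, Associated (β ^ p) α := by
  obtain ⟨J, hJ⟩ : ∃ J : Ideal O, Ideal.span {α} = J ^ n :=
    exists_eq_pow_of_mul_eq_pow_of_coprime ((Ideal.isCoprime_span_singleton_iff α α').mpr hcop)
      (by rw [Ideal.span_singleton_mul_span_singleton, h, ← Ideal.span_singleton_pow])
  have hJmem : J ∈ nonZeroDivisors (Ideal O) := by
    refine mem_nonZeroDivisors_of_ne_zero fun hJ0 => h0 ?_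
    rwa [hJ0, zero_pow hn.ne', Ideal.zero_eq_bot, Ideal.span_singleton_eq_bot] at hJ
  have hpow (k : ℕ) : ClassGroup.mk0 ⟨J, hJmem⟩ ^ k = 1 ↔ (J ^ k).IsPrincipal := by
    rw [← map_pow, ← ClassGroup.mk0_eq_one_iff (pow_mem hJmem k)]
    rfl
  refine (dvd_natCard_or_exists_prime_pow_div_eq_one hn
    ((hpow n).mpr ⟨α, hJ.symm⟩)).imp_right fun ⟨p, hp, hpn, h1⟩ => ⟨p, hp, hpn, ?_⟩
  obtain ⟨β, hβ⟩ := ((hpow _).mp h1).principal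
  refine ⟨β, ?_⟩
  rw [← Ideal.span_singleton_eq_span_singleton, ← Ideal.span_singleton_pow, hJ,
    ← Ideal.submodule_span_eq, ← hβ, ← pow_mul, Nat.div_mul_cancel hpn]

theorem isCoprime_add_sub_of_isCoprime_two_mul {R : Type*} [CommRing R] {a b : R}
    (h : IsCoprime (2 * a) ((a + b) * (a - b))) : IsCoprime (a + b) (a - b) := by
  obtain ⟨e, f, hef⟩ := h
  exact ⟨e + f * (a - b), e, by linear_combination hef⟩

section

open NumberField

variable {D : ℤ} {x m n : ℕ}

theorem exists_prime_pow_eq_add_of_not_dvd_classNumSqrt (hD : D ≤ 0) (hD4 : D % 4 = 2)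
    {σ : 𝓞 (Qsqrt D)} (hσ : σ ^ 2 = D) (hn : Odd n) (hcop : Nat.Coprime (2 * x) m)
    (h : D = (x : ℤ) ^ 2 - (m : ℤ) ^ n) (hdvd : ¬n ∣ classNumSqrt D) :
    ∃ p : ℕ, p.Prime ∧ p ∣ n ∧ ∃ β : 𝓞 (Qsqrt D), β ^ p = x + σ := by
  have hprod : ((x : 𝓞 (Qsqrt D)) + σ) * (x - σ) = m ^ n := by
    have hcast : (D : 𝓞 (Qsqrt D)) = x ^ 2 - m ^ n := by
      simpa using congrArg (Int.cast : ℤ → 𝓞 (Qsqrt D)) h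
    linear_combination -hσ - hcast
  have hm : m ≠ 0 := by
    rintro rfl
    rw [Nat.coprime_zero_right] at hcop
    omega
  have hne : (x : 𝓞 (Qsqrt D)) + σ ≠ 0 :=
    left_ne_zero_of_mul (hprod ▸ pow_ne_zero n (Nat.cast_ne_zero.mpr hm))
  have hcop' : IsCoprime ((x : 𝓞 (Qsqrt D)) + σ) (x - σ) := by
    apply isCoprime_add_sub_of_isCoprime_two_mul
    rw [hprod]
    exact_mod_cast (Nat.isCoprime_iff_coprime.mpr (hcop.pow_right n)).intCast
  obtain ⟨p, hp, hpn, β, u, hu⟩ :=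
    (dvd_card_classGroup_or_exists_associated_pow hn.pos hne hcop' hprod).resolve_left hdvd
  refine ⟨p, hp, hpn, ?_⟩
  rcases units_eq_one_or_neg_one hD hD4 u with h1 | h1
  · exact ⟨β, by rw [← hu, h1, mul_one]⟩
  · exact ⟨-β, by rw [← hu, h1, (hn.of_dvd_nat hpn).neg_pow, mul_neg_one]⟩

theorem eq_three_of_pow_eq_add_cpow_one_half (hD : D ≤ 0) (hD4 : D % 4 = 2) {L p : ℕ}
    (hp : p.Prime) (hodd : Odd p) (hx : x = 3 ∨ x = 5) (hL : L % 4 = 3) (hcop : ¬x ∣ L)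
    (h : D = (x : ℤ) ^ 2 - (L : ℤ) ^ p) {β : 𝓞 (Qsqrt D)}
    (hβ : algebraMap (𝓞 (Qsqrt D)) ℂ β ^ p = x + (D : ℂ) ^ ((1 : ℂ) / 2)) : L = 3 ∧ p = 3 := by
  obtain ⟨a, d, t, hat, ht, hd, -⟩ := exists_int_algebraMap_eq_add hD hD4 β
  rw [hat] at hβ
  have hs := cpow_one_half_sq D
  have hnorm : a ^ 2 - d = L := by
    have hpow := congrArg Complex.normSq hβ
    rw [map_pow, normSq_intCast_add_of_sq_eq a hd ht, ← Int.cast_natCast x,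
      normSq_intCast_add_of_sq_eq x hD hs, h, sub_sub_cancel] at hpow
    refine (pow_left_inj₀ (by nlinarith [sq_nonneg a]) (by positivity) hp.ne_zero).mp ?_
    exact_mod_cast hpow
  let φ : ℤ√d →+* ℂ := Zsqrtd.lift ⟨t, by rw [← sq, ht]⟩
  have hφ (w : ℤ√d) : φ w = w.re + w.im * t := rfl
  have hre (w : ℤ√d) : (φ w).re = w.re := by
    simp [hφ, re_eq_zero_of_sq_eq_intCast hd ht]
  have hx_re : ((⟨a, 1⟩ : ℤ√d) ^ p).re = x := by
    have h1 := hre (⟨a, 1⟩ ^ p)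
    rw [map_pow, hφ, Int.cast_one, one_mul, hβ, Complex.add_re, Complex.natCast_re,
      re_eq_zero_of_sq_eq_intCast hD hs, add_zero] at h1
    exact_mod_cast h1.symm
  have hN : (⟨a, 1⟩ : ℤ√d).norm = L := by
    rw [← hnorm, Zsqrtd.norm_def]
    ring
  obtain ⟨h3, hp3⟩ := norm_eq_three_of_re_pow_eq hd hp hodd hx
    (by rw [hN]; exact_mod_cast (hL : L ≡ 3 [MOD 4])) (by rw [hN]; exact_mod_cast hcop) hx_re
  exact ⟨by rw [hN] at h3; exact_mod_cast h3, hp3⟩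

theorem pow_mod_four_eq_three (hm : m % 4 = 3) (hn : Odd n) : m ^ n % 4 = 3 := by
  obtain ⟨k, rfl⟩ := hn
  rw [Nat.pow_mod, hm, pow_succ, pow_mul, Nat.mul_mod, Nat.pow_mod (3 ^ 2)]
  norm_num

theorem sq_sub_pow_nonpos (hx : x ≤ 5) (hm : m % 4 = 3) (hn1 : 1 < n) (hn : Odd n) :
    (x : ℤ) ^ 2 - (m : ℤ) ^ n ≤ 0 := by
  have hn3 : 3 ≤ n := by
    obtain ⟨k, rfl⟩ := hn
    omega
  have hle : x ^ 2 ≤ m ^ n :=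
    calc x ^ 2 ≤ 5 ^ 2 := by gcongr
      _ ≤ 3 ^ 3 := by norm_num
      _ ≤ m ^ 3 := by gcongr; omega
      _ ≤ m ^ n := by gcongr; omega
  exact sub_nonpos.mpr (by exact_mod_cast hle)

theorem sq_sub_pow_mod_four (hx : Odd x) (hm : m % 4 = 3) (hn : Odd n) :
    ((x : ℤ) ^ 2 - (m : ℤ) ^ n) % 4 = 2 := by
  have hx4 : (x : ℤ) ^ 2 % 4 = 1 := Int.sq_mod_four_eq_one_of_odd (by exact_mod_cast hx)
  have hm4 : (m : ℤ) ^ n % 4 = 3 := by exact_mod_cast pow_mod_four_eq_three hm hn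
  omega

end

/-- Let `ℓ > 1` and `n > 1` be odd integers with `ℓ ≡ 3 (mod 4)`. For `x ∈ {3, 5}` with
`gcd(ℓ, x) = 1`, the class number of `ℚ(√(x² − ℓⁿ))` is divisible by `n`, except when
`(ℓ, n) = (3, 3)`. -/
theorem classNumber_dvd_of_sq_sub_pow_three_five
    (ℓ n x : ℕ) (hℓ1 : 1 < ℓ) (hℓodd : Odd ℓ) (hn1 : 1 < n) (hnodd : Odd n)
    (hℓ4 : ℓ % 4 = 3) (hx : x = 3 ∨ x = 5) (hgcd : Nat.gcd ℓ x = 1)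
    (hexc : ¬ (ℓ = 3 ∧ n = 3)) :
    n ∣ classNumSqrt ((x : ℤ) ^ 2 - (ℓ : ℤ) ^ n) := by
  by_contra hdvd
  obtain ⟨D, hD⟩ : ∃ D : ℤ, D = (x : ℤ) ^ 2 - (ℓ : ℤ) ^ n := ⟨_, rfl⟩
  have hneg : D ≤ 0 := hD ▸ sq_sub_pow_nonpos (by omega) hℓ4 hn1 hnodd
  have hxodd : Odd x := by rcases hx with rfl | rfl <;> decide
  have hmod : D % 4 = 2 := hD ▸ sq_sub_pow_mod_four hxodd hℓ4 hnodd
  rw [← hD] at hdvd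
  obtain ⟨σ, hσ⟩ := exists_ringOfIntegers_algebraMap_eq_cpow_one_half D
  have hσ2 : σ ^ 2 = D := FaithfulSMul.algebraMap_injective _ ℂ (by
    rw [map_pow, hσ, cpow_one_half_sq, map_intCast])
  obtain ⟨p, hp, ⟨k, rfl⟩, β, hβ⟩ := exists_prime_pow_eq_add_of_not_dvd_classNumSqrt hneg hmod hσ2
    hnodd (Nat.Coprime.mul_left (Nat.coprime_two_left.mpr hℓodd) (Nat.Coprime.symm hgcd)) hD hdvd
  obtain ⟨hpodd, hkodd⟩ := Nat.odd_mul.mp hnodd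
  have hndvd : ¬x ∣ ℓ ^ k := fun h => by
    have := (Nat.Coprime.pow_right k (Nat.Coprime.symm hgcd)).eq_one_of_dvd h
    omega
  obtain ⟨hℓk, rfl⟩ := eq_three_of_pow_eq_add_cpow_one_half hneg hmod hp hpodd hx
    (pow_mod_four_eq_three hℓ4 hkodd) hndvd
    (by rw [hD]; push_cast; ring) (by rw [← map_pow, hβ, map_add, map_natCast, hσ])
  obtain ⟨rfl, rfl⟩ := Nat.prime_three.pow_eq_iff.mp hℓk
  exact hexc ⟨rfl, rfl⟩
end
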